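/- Let Ω = (0,1)×(−1,1). Then the set A = {u ∈ BV(Ω;ℝ²) : u(x) = R(x₂)x + ψ(x₂) a.e. with R ∈ BV(−1,1;SO(2)), ψ ∈ BV(−1,1;ℝ²), det ∇u = 1 a.e.} admits the following two representations: (1) A = {u ∈ BV(Ω;ℝ²) : ∇u(x) = R(x₂)(I + γ(x₂) e₁⊗e₂) for a.e. x ∈ Ω, with R ∈ BV(−1,1;SO(2)), γ ∈ L¹(−1,1), and (D^s u)e₁ = 0}; (2) A = {u ∈ BV(Ω;ℝ²) : u(x) = R(x₂)x + ψ(x₂) a.e. with R ∈ BV(−1,1;SO(2)) and ψ ∈ BV(−1,1;ℝ²) such that ψ'·Re₂ = 0 and R' = 0 a.e. in (−1,1)}. -/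

import Mathlib

open MeasureTheory Set Filter Topology
open scoped ENNReal

noncomputable section

/-- We identify `ℝ²` with maps `Fin 2 → ℝ`; `x 0` is the `x₁` coordinate and
`x 1` the `x₂` coordinate. -/
abbrev V2 := Fin 2 → ℝ

/-- `2 × 2` real matrices. -/
abbrev Mat2 := Matrix (Fin 2) (Fin 2) ℝ

/-- Proper rotations: `SO(2) = {R : R Rᵀ = 1, det R = 1}`. -/
def SO2 : Set Mat2 := {R | R * R.transpose = 1 ∧ R.det = 1}

def e1 : V2 := ![1, 0]
def e2 : V2 := ![0, 1]

/-- Euclidean norm on `ℝ²`. -/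
def vnorm (v : V2) : ℝ := Real.sqrt (v 0 ^ 2 + v 1 ^ 2)

/-- Frobenius norm on `2 × 2` matrices. -/
def mnorm (M : Mat2) : ℝ := Real.sqrt (∑ i, ∑ j, M i j ^ 2)

/-- Euclidean inner product on `ℝ²`. -/
def dot (v w : V2) : ℝ := ∑ i, v i * w i

/-- Tensor (outer) product `a ⊗ b = a bᵀ` of two vectors. -/
def outer (a b : V2) : Mat2 := Matrix.of fun i j => a i * b j

/-- Identification of `ℝ²` with the Euclidean space `EuclideanSpace ℝ (Fin 2)`. -/
def vToE (v : V2) : EuclideanSpace ℝ (Fin 2) := (EuclideanSpace.equiv (Fin 2) ℝ).symm v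

/-- Identification of `2×2` matrices with `EuclideanSpace ℝ (Fin 2 × Fin 2)`
(so that the induced norm is the Frobenius norm). -/
def mToE (M : Mat2) : EuclideanSpace ℝ (Fin 2 × Fin 2) :=
  (EuclideanSpace.equiv (Fin 2 × Fin 2) ℝ).symm fun p => M p.1 p.2

/-- A vector-valued function of one real variable has bounded variation on `s`
(with respect to the Euclidean norm). -/
def BVv (ψ : ℝ → V2) (s : Set ℝ) : Prop := BoundedVariationOn (fun t => vToE (ψ t)) s

/-- A matrix-valued function of one real variable has bounded variation on `s`
(with respect to the Frobenius norm). -/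
def BVm (R : ℝ → Mat2) (s : Set ℝ) : Prop := BoundedVariationOn (fun t => mToE (R t)) s

/-- Componentwise (a.e. pointwise) derivative of a vector-valued function of one variable.
For a one-dimensional `BV` function, the classical derivative exists a.e. and coincides with
the density of the absolutely continuous part of its distributional derivative
(the approximate derivative). -/
def vecDeriv (ψ : ℝ → V2) (t : ℝ) : V2 := fun i => deriv (fun s => ψ s i) t

/-- Componentwise derivative of a matrix-valued function of one variable. -/
def mDeriv (R : ℝ → Mat2) (t : ℝ) : Mat2 := Matrix.of fun i j => deriv (fun s => R s i j) t

/-- The rigid layers `ε Y_rig = {x : Int.fract (x₂/ε) ∈ [λ, 1)}` (1-periodic extension of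
`[0,1) × [λ,1)`, scaled by `ε`). -/
def rigid2 (lam ε : ℝ) : Set V2 := {x | lam ≤ Int.fract (x 1 / ε)}

/-- The one-dimensional rigid layers `ε I_rig`, where `I_rig` is the 1-periodic extension
of `[λ, 1)`. -/
def rigid1 (lam ε : ℝ) : Set ℝ := {t | lam ≤ Int.fract (t / ε)}

/-- `a_Ω = inf_{x ∈ Ω} x₂`. -/
def aOm (Ω : Set V2) : ℝ := sInf ((fun x : V2 => x 1) '' Ω)

/-- `b_Ω = sup_{x ∈ Ω} x₂`. -/
def bOm (Ω : Set V2) : ℝ := sSup ((fun x : V2 => x 1) '' Ω)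

/-- `Ω` is `x₁`-connected: every horizontal slice is a (possibly empty) interval. -/
def X1Connected (Ω : Set V2) : Prop := ∀ t : ℝ, OrdConnected {s : ℝ | ![s, t] ∈ Ω}

/-- A (nonempty) bounded Lipschitz domain: near every boundary point, after a rotation,
`Ω` is the region above the graph of a Lipschitz function. -/
def IsLipschitzDomain (Ω : Set V2) : Prop :=
  IsOpen Ω ∧ Ω.Nonempty ∧ Bornology.IsBounded Ω ∧
    ∀ x ∈ frontier Ω, ∃ Q ∈ SO2, ∃ L : NNReal, ∃ f : ℝ → ℝ, ∃ r : ℝ, 0 < r ∧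
      LipschitzWith L f ∧ ∀ y ∈ Metric.ball x r, (y ∈ Ω ↔ f (Q.mulVec y 0) < Q.mulVec y 1)

/-- Partial derivative `∂_j φ` of a scalar test function. -/
def pd (j : Fin 2) (φ : V2 → ℝ) (x : V2) : ℝ := fderiv ℝ φ x (Pi.single j 1)

/-- Componentwise integrability of a matrix-valued map. -/
def IntegrableOnM (g : V2 → Mat2) (Ω : Set V2) : Prop :=
  ∀ i j, IntegrableOn (fun x => g x i j) Ω volume

/-- `u ∈ W^{1,1}(Ω;ℝ²)` with weak gradient `gu`, expressed through integration by parts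
against smooth compactly supported test functions. -/
structure IsSobolev11On (Ω : Set V2) (u : V2 → V2) (gu : V2 → Mat2) : Prop where
  int_u : IntegrableOn u Ω volume
  int_gu : IntegrableOnM gu Ω
  ibp : ∀ φ : V2 → ℝ, ContDiff ℝ (⊤ : ℕ∞) φ → HasCompactSupport φ → tsupport φ ⊆ Ω →
    ∀ i j, ∫ x in Ω, u x i * pd j φ x = - ∫ x in Ω, φ x * gu x i j

/-- `u ∈ BV(Ω;ℝ²)`, with distributional derivative `Du = gu · L² + gs · σ`.
Here `gu` is the approximate differential (density of the absolutely continuous part),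
`σ = |D^s u|` is the total variation measure of the singular part (a finite measure,
concentrated on `Ω` and singular with respect to Lebesgue measure), and `gs` is the
polar density of the singular part, of unit Frobenius norm `σ`-a.e. -/
structure HasBVDerivOn (Ω : Set V2) (u : V2 → V2) (gu : V2 → Mat2)
    (σ : Measure V2) (gs : V2 → Mat2) : Prop where
  int_u : IntegrableOn u Ω volume
  int_gu : IntegrableOnM gu Ω
  fin : σ Set.univ ≠ ⊤
  conc : σ Ωᶜ = 0
  perp : σ ⟂ₘ (volume : Measure V2)
  meas_gs : ∀ i j, AEMeasurable (fun x => gs x i j) σ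
  unit : ∀ᵐ x ∂σ, mnorm (gs x) = 1
  ibp : ∀ φ : V2 → ℝ, ContDiff ℝ (⊤ : ℕ∞) φ → HasCompactSupport φ → tsupport φ ⊆ Ω →
    ∀ i j, ∫ x in Ω, u x i * pd j φ x
        = (- ∫ x in Ω, φ x * gu x i j) - ∫ x, φ x * gs x i j ∂σ

/-- `L¹(Ω;ℝ²)` convergence of a sequence. -/
def L1ConvOn (Ω : Set V2) (un : ℕ → V2 → V2) (u : V2 → V2) : Prop :=
  Tendsto (fun n => ∫ x in Ω, vnorm (un n x - u x)) atTop (𝓝 0)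

/-- Weak* convergence of the measures `gn n · L²∟Ω` to `gu · L²∟Ω + gs · σ`
in `M(Ω; ℝ^{2×2})`, tested against continuous functions compactly supported in `Ω`. -/
def MeasConv (Ω : Set V2) (gn : ℕ → V2 → Mat2) (gu : V2 → Mat2)
    (σ : Measure V2) (gs : V2 → Mat2) : Prop :=
  ∀ φ : V2 → ℝ, Continuous φ → HasCompactSupport φ → tsupport φ ⊆ Ω → ∀ i j,
    Tendsto (fun n => ∫ x in Ω, φ x * gn n x i j) atTop
      (𝓝 ((∫ x in Ω, φ x * gu x i j) + ∫ x, φ x * gs x i j ∂σ))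

/-- Weak* convergence in `BV(Ω;ℝ²)` of a sequence of `W^{1,1}` maps to a `BV` limit:
`L¹` convergence together with weak* convergence of the derivative measures. -/
def WeakStarToBV (Ω : Set V2) (un : ℕ → V2 → V2) (u : V2 → V2) : Prop :=
  ∃ gu σ gs, HasBVDerivOn Ω u gu σ gs ∧ L1ConvOn Ω un u ∧
    ∀ gn : ℕ → V2 → Mat2, (∀ n, IsSobolev11On Ω (un n) (gn n)) → MeasConv Ω gn gu σ gs

/-- `u ∈ A_ε`, witnessed by the data `R ∈ L^∞(Ω;SO(2))` and `γ ∈ L¹(Ω)`: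
`u ∈ W^{1,1}(Ω;ℝ²)` with `∇u = R (I + γ e₁⊗e₂)` a.e. and `γ = 0` a.e. on `εY_rig ∩ Ω`. -/
structure MemAeps (Ω : Set V2) (lam ε : ℝ) (u : V2 → V2)
    (R : V2 → Mat2) (γ : V2 → ℝ) : Prop where
  so2 : ∀ᵐ x ∂(volume.restrict Ω), R x ∈ SO2
  int_γ : IntegrableOn γ Ω volume
  sob : IsSobolev11On Ω u fun x => R x * (1 + γ x • outer e1 e2)
  rig : ∀ᵐ x ∂(volume.restrict (Ω ∩ rigid2 lam ε)), γ x = 0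

/-- The elastoplastic energy `E_ε(u) = ∫_Ω |γ| dx` for `u ∈ A_ε`, `∞` otherwise,
as an `ℝ≥0∞`-valued functional (the decomposition data is essentially unique). -/
def Eeps (Ω : Set V2) (lam ε : ℝ) (u : V2 → V2) : ℝ≥0∞ :=
  sInf {c | ∃ R γ, MemAeps Ω lam ε u R γ ∧ c = ∫⁻ x in Ω, ENNReal.ofReal |γ x|}

/-- `u ∈ A` relative to the vertical interval `(a, b)`:
`u ∈ BV(Ω;ℝ²)` with `u(x) = R(x₂)x + ψ(x₂)` a.e., `R ∈ BV(a,b;SO(2))`,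
`ψ ∈ BV(a,b;ℝ²)` and `det ∇u = 1` a.e. in `Ω`. -/
def memAOn (Ω : Set V2) (a b : ℝ) (u : V2 → V2) : Prop :=
  ∃ gu σ gs, HasBVDerivOn Ω u gu σ gs ∧
    (∃ R : ℝ → Mat2, ∃ ψ : ℝ → V2, (∀ t ∈ Ioo a b, R t ∈ SO2) ∧
      BVm R (Ioo a b) ∧ BVv ψ (Ioo a b) ∧
      ∀ᵐ x ∂(volume.restrict Ω), u x = (R (x 1)).mulVec x + ψ (x 1)) ∧
    ∀ᵐ x ∂(volume.restrict Ω), (gu x).det = 1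

/-- `u ∈ A`. -/
def memA (Ω : Set V2) (u : V2 → V2) : Prop := memAOn Ω (aOm Ω) (bOm Ω) u

/-- `u ∈ A∥` relative to the vertical interval `(a,b)`:
`u(x) = Rx + ϑ(x₂) R e₁ + c` a.e. with a constant rotation `R ∈ SO(2)`,
`ϑ ∈ BV(a,b)` and `c ∈ ℝ²`. -/
def memAparOn (Ω : Set V2) (a b : ℝ) (u : V2 → V2) : Prop :=
  ∃ R ∈ SO2, ∃ ϑ : ℝ → ℝ, ∃ c : V2, BoundedVariationOn ϑ (Ioo a b) ∧
    ∀ᵐ x ∂(volume.restrict Ω), u x = R.mulVec x + ϑ (x 1) • R.mulVec e1 + c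

/-- `u ∈ A∥`. -/
def memApar (Ω : Set V2) (u : V2 → V2) : Prop := memAparOn Ω (aOm Ω) (bOm Ω) u

/-- The limit energy `E(u) = ∫_Ω |ψ'·Re₁| dx + |D^s u|(Ω)` for `u ∈ A`, `∞` otherwise. -/
def Efun (Ω : Set V2) (u : V2 → V2) : ℝ≥0∞ :=
  sInf {c | ∃ gu σ gs, HasBVDerivOn Ω u gu σ gs ∧
    ∃ R : ℝ → Mat2, ∃ ψ : ℝ → V2,
      (∀ t ∈ Ioo (aOm Ω) (bOm Ω), R t ∈ SO2) ∧ BVm R (Ioo (aOm Ω) (bOm Ω)) ∧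
      BVv ψ (Ioo (aOm Ω) (bOm Ω)) ∧
      (∀ᵐ x ∂(volume.restrict Ω), u x = (R (x 1)).mulVec x + ψ (x 1)) ∧
      (∀ᵐ x ∂(volume.restrict Ω), (gu x).det = 1) ∧
      c = (∫⁻ x in Ω, ENNReal.ofReal |dot (vecDeriv ψ (x 1)) ((R (x 1)).mulVec e1)|)
          + σ Set.univ}

/-- The limit energy on `A∥`: `E(u) = ∫_Ω |ϑ'(x₂)| dx + |D^s u|(Ω)` for `u ∈ A∥`,
`∞` otherwise. -/
def EparFun (Ω : Set V2) (u : V2 → V2) : ℝ≥0∞ :=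
  sInf {c | ∃ gu σ gs, HasBVDerivOn Ω u gu σ gs ∧
    ∃ R ∈ SO2, ∃ ϑ : ℝ → ℝ, ∃ c0 : V2, BoundedVariationOn ϑ (Ioo (aOm Ω) (bOm Ω)) ∧
      (∀ᵐ x ∂(volume.restrict Ω), u x = R.mulVec x + ϑ (x 1) • R.mulVec e1 + c0) ∧
      c = (∫⁻ x in Ω, ENNReal.ofReal |deriv ϑ (x 1)|) + σ Set.univ}

/-- The regularized limit energy `E^δ(u) = ∫_Ω |ϑ'| dx + |D^s u|(Ω) + δ|Ω|` on `A∥`,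
`∞` otherwise. -/
def EDelta (Ω : Set V2) (δ : ℝ) (u : V2 → V2) : ℝ≥0∞ :=
  EparFun Ω u + ENNReal.ofReal δ * volume Ω

/-- `‖v‖_{W^{1,p}(Ω;ℝ²)}^p = ∫_Ω |v|^p + ∫_Ω |Dv|^p` for a map `v` with weak Jacobian `G`. -/
def Wp1 (p : ℝ) (Ω : Set V2) (v : V2 → V2) (G : V2 → Mat2) : ℝ≥0∞ :=
  (∫⁻ x in Ω, ENNReal.ofReal (vnorm (v x) ^ p)) + ∫⁻ x in Ω, ENNReal.ofReal (mnorm (G x) ^ p)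

/-- The regularized energy
`E^δ_ε(u) = ∫_Ω |γ| dx + δ ‖∂₁ u‖_{W^{1,p}(Ω;ℝ²)}^p` for `u ∈ A_ε` with
`∂₁u = R e₁ ∈ W^{1,p}(Ω;ℝ²)`, and `∞` otherwise. -/
def EepsDelta (Ω : Set V2) (lam ε δ p : ℝ) (u : V2 → V2) : ℝ≥0∞ :=
  sInf {c | ∃ R γ, MemAeps Ω lam ε u R γ ∧
    ∃ G : V2 → Mat2, IsSobolev11On Ω (fun x => (R x).mulVec e1) G ∧
      c = (∫⁻ x in Ω, ENNReal.ofReal |γ x|) +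
          ENNReal.ofReal δ * Wp1 p Ω (fun x => (R x).mulVec e1) G}

/-- `x` is an approximate jump point of `u`, with one-sided approximate limits `a ≠ b`
relative to a unit normal `ν`. -/
def JumpPt (u : V2 → V2) (x : V2) : Prop :=
  ∃ a b ν : V2, a ≠ b ∧ vnorm ν = 1 ∧
    Tendsto (fun r : ℝ =>
        (∫⁻ z in {z | z ∈ Metric.ball x r ∧ 0 < dot (z - x) ν},
            ENNReal.ofReal (vnorm (u z - a))) / volume (Metric.ball x r))
      (𝓝[>] 0) (𝓝 0) ∧
    Tendsto (fun r : ℝ =>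
        (∫⁻ z in {z | z ∈ Metric.ball x r ∧ dot (z - x) ν < 0},
            ENNReal.ofReal (vnorm (u z - b))) / volume (Metric.ball x r))
      (𝓝[>] 0) (𝓝 0)

/-- The jump set `J_u` of `u` in `Ω`. -/
def jumpSet (Ω : Set V2) (u : V2 → V2) : Set V2 := {x ∈ Ω | JumpPt u x}

/-- `u ∈ SBV_∞(Ω;ℝ²)`: `u ∈ BV` with singular part concentrated on the jump set
(no Cantor part), `∇u ∈ L^∞(Ω;ℝ^{2×2})` and `H¹(J_u) < ∞`. -/
def memSBVinf (Ω : Set V2) (u : V2 → V2) : Prop :=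
  ∃ gu σ gs, HasBVDerivOn Ω u gu σ gs ∧
    σ {x | ¬ JumpPt u x} = 0 ∧
    (∃ M : ℝ, ∀ᵐ x ∂(volume.restrict Ω), mnorm (gu x) ≤ M) ∧
    Measure.hausdorffMeasure (1 : ℝ) (jumpSet Ω u) ≠ ⊤

/-- Piecewise constant functions on `(a,b)` with finitely many jumps
(the class `PC(a,b)`). -/
def PCOn {α : Type*} (a b : ℝ) (f : ℝ → α) : Prop :=
  ∃ S : Finset ℝ, ∀ s₁ ∈ Ioo a b, ∀ s₂ ∈ Ioo a b, s₁ ≤ s₂ →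
    (∀ r ∈ S, r ∉ Icc s₁ s₂) → f s₁ = f s₂

/-- Piecewise Lipschitz functions on `(a,b)` with finitely many jump points:
the class `SBV_∞(a,b;ℝ²)` of one-dimensional special functions of bounded variation
with bounded derivative and finitely many jumps. -/
def PLipOn (a b : ℝ) (f : ℝ → V2) : Prop :=
  ∃ S : Finset ℝ, ∃ L : ℝ, 0 ≤ L ∧ ∀ s₁ ∈ Ioo a b, ∀ s₂ ∈ Ioo a b, s₁ ≤ s₂ →
    (∀ r ∈ S, r ∉ Icc s₁ s₂) → vnorm (f s₂ - f s₁) ≤ L * (s₂ - s₁)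

/-- The rectangle `Ω = (0,1) × (−1,1)`. -/
def Rect : Set V2 := {x | x 0 ∈ Ioo (0:ℝ) 1 ∧ x 1 ∈ Ioo (-1:ℝ) 1}

/-- `f ∈ W^{1,1}(a,b)`: `f` has an integrable weak derivative on `(a,b)`
(absolutely continuous representative). -/
def IsW11On (f : ℝ → ℝ) (a b : ℝ) : Prop :=
  ∃ g : ℝ → ℝ, IntegrableOn g (Ioo a b) volume ∧
    ∀ s ∈ Ioo a b, ∀ t ∈ Ioo a b, f t - f s = ∫ r in s..t, g r

/-!
Everything reduces to maps of the form `u(x) = x₁ a(x₂) + b(x₂)`. By uniqueness of the Lebesgue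
decomposition, `∂₁u` has density `a(x₂)` and no singular part, and conversely this forces `u` to be
affine in `x₁` (du Bois-Reymond lemma, slice by slice). In the converse direction `b` is a priori
only integrable; testing `∂₂` of `b(x₂)` with `ρ(x₁) η(x₂)`, `∫ ρ = 1`, exhibits its derivative as
the `x₂`-marginal of a finite signed measure, so that `b` is of bounded variation.

For `u(x) = R(x₂)x + ψ(x₂)` the product rule gives `∇u = R + (R'x + ψ') ⊗ e₂`. Since `RᵀR'` is
antisymmetric, `R'e₂ · Re₂ = 0` and hence `det ∇u = 1 + x₁ (R'e₁ · Re₂) + ψ' · Re₂`. This equals `1`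
for almost every `x₁` only if both coefficients vanish, that is `R' = 0` and `ψ' · Re₂ = 0`, and
then `ψ' = γ Re₁` with `γ = ψ' · Re₁`.
-/

section TestFunctions

variable {E F : Type*} [NormedAddCommGroup E] [NormedSpace ℝ E] [NormedAddCommGroup F]
  [NormedSpace ℝ F] {Ω : Set E} {φ ψ : E → ℝ}

/-- The smooth functions compactly supported in `Ω` against which distributional derivatives
are tested. -/
structure IsTestFunction (Ω : Set E) (φ : E → ℝ) : Prop where
  contDiff : ContDiff ℝ (⊤ : ℕ∞) φ
  hasCompactSupport : HasCompactSupport φ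
  tsupport_subset : tsupport φ ⊆ Ω

namespace IsTestFunction

lemma eq_zero_of_notMem (hφ : IsTestFunction Ω φ) {x : E} (hx : x ∉ Ω) : φ x = 0 :=
  image_eq_zero_of_notMem_tsupport fun h => hx (hφ.tsupport_subset h)

lemma differentiable (hφ : IsTestFunction Ω φ) : Differentiable ℝ φ :=
  hφ.contDiff.differentiable (by simp)

lemma sub (hφ : IsTestFunction Ω φ) (hψ : IsTestFunction Ω ψ) :
    IsTestFunction Ω (fun x => φ x - ψ x) where
  contDiff := hφ.contDiff.sub hψ.contDiff
  hasCompactSupport := hφ.hasCompactSupport.sub hψ.hasCompactSupport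
  tsupport_subset := (tsupport_sub φ ψ).trans (union_subset hφ.tsupport_subset hψ.tsupport_subset)

lemma const_mul (c : ℝ) (hφ : IsTestFunction Ω φ) : IsTestFunction Ω (fun x => c * φ x) where
  contDiff := contDiff_const.mul hφ.contDiff
  hasCompactSupport := hφ.hasCompactSupport.mul_left
  tsupport_subset := (tsupport_mul_subset_right (f := fun _ => c)).trans hφ.tsupport_subset

lemma fderiv_apply (hφ : IsTestFunction Ω φ) (v : E) :
    IsTestFunction Ω (fun x => fderiv ℝ φ x v) where
  contDiff := (hφ.contDiff.fderiv_right (m := (⊤ : ℕ∞)) (by simp)).clm_apply contDiff_const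
  hasCompactSupport := hφ.hasCompactSupport.fderiv_apply ℝ v
  tsupport_subset := (tsupport_fderiv_apply_subset ℝ v).trans hφ.tsupport_subset

lemma deriv {U : Set ℝ} {η : ℝ → ℝ} (hη : IsTestFunction U η) : IsTestFunction U (deriv η) :=
  hη.fderiv_apply 1

lemma comp_continuousLinearEquiv {U : Set F} {η : F → ℝ} (hη : IsTestFunction U η) (L : E ≃L[ℝ] F) :
    IsTestFunction (L ⁻¹' U) (η ∘ L) where
  contDiff := hη.contDiff.comp L.contDiff
  hasCompactSupport := hη.hasCompactSupport.comp_homeomorph L.toHomeomorph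
  tsupport_subset := (tsupport_comp_subset_preimage η L.continuous).trans
    (preimage_mono hη.tsupport_subset)

lemma slice {U : Set F} {φ : E × F → ℝ} (hφ : IsTestFunction (Ω ×ˢ U) φ) (x : E) :
    IsTestFunction U (fun y => φ (x, y)) where
  contDiff := hφ.contDiff.comp (contDiff_prodMk_right x)
  hasCompactSupport := .intro (hφ.hasCompactSupport.image continuous_snd) fun y hy =>
    image_eq_zero_of_notMem_tsupport fun h => hy ⟨(x, y), h, rfl⟩
  tsupport_subset _ hy := (hφ.tsupport_subset
    (tsupport_comp_subset_preimage φ (Continuous.prodMk_right x) hy)).2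

lemma fderiv_slice {U : Set F} {φ : E × F → ℝ} (hφ : IsTestFunction (Ω ×ˢ U) φ) (x : E) (y w : F) :
    fderiv ℝ (fun y => φ (x, y)) y w = fderiv ℝ φ (x, y) (0, w) := by
  have h := (hφ.differentiable (x, y)).hasFDerivAt.comp y (hasFDerivAt_prodMk_right x y)
  exact DFunLike.congr_fun h.fderiv w

lemma tensor {U : Set F} {η : F → ℝ} (hφ : IsTestFunction Ω φ) (hη : IsTestFunction U η) :
    IsTestFunction (Ω ×ˢ U) (fun p => φ p.1 * η p.2) where
  contDiff := (hφ.contDiff.comp contDiff_fst).mul (hη.contDiff.comp contDiff_snd)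
  hasCompactSupport := by
    refine HasCompactSupport.intro (hφ.hasCompactSupport.prod hη.hasCompactSupport) fun p hp => ?_
    rw [mem_prod, not_and_or] at hp
    rcases hp with hp | hp <;> simp [image_eq_zero_of_notMem_tsupport hp]
  tsupport_subset p hp :=
    ⟨hφ.tsupport_subset (tsupport_comp_subset_preimage φ continuous_fst
      (tsupport_mul_subset_left hp)),
     hη.tsupport_subset (tsupport_comp_subset_preimage η continuous_snd
      (tsupport_mul_subset_right hp))⟩

lemma fderiv_tensor {U : Set F} {η : F → ℝ} (hφ : IsTestFunction Ω φ) (hη : IsTestFunction U η)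
    (p : E × F) (v : E) (w : F) : fderiv ℝ (fun p : E × F => φ p.1 * η p.2) p (v, w)
      = fderiv ℝ φ p.1 v * η p.2 + φ p.1 * fderiv ℝ η p.2 w := by
  have h := ((hφ.differentiable p.1).hasFDerivAt.comp p hasFDerivAt_fst).mul
    ((hη.differentiable p.2).hasFDerivAt.comp p hasFDerivAt_snd)
  refine (DFunLike.congr_fun h.fderiv (v, w)).trans ?_
  simp only [Function.comp_apply, add_apply, smul_apply, ContinuousLinearMap.comp_apply,
    ContinuousLinearMap.coe_snd', smul_eq_mul, ContinuousLinearMap.coe_fst']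
  ring

variable [MeasurableSpace E] [BorelSpace E]

lemma integrable_comp_mul {X : Type*} [MeasurableSpace X] {μ : Measure X} (hφ : IsTestFunction Ω φ)
    {p : X → E} (hp : Measurable p) {g : X → ℝ} (hg : Integrable g μ) :
    Integrable (fun x => φ (p x) * g x) μ := by
  obtain ⟨C, hC⟩ := hφ.hasCompactSupport.exists_bound_of_continuous hφ.contDiff.continuous
  exact hg.bdd_mul (hφ.contDiff.continuous.measurable.comp hp).aestronglyMeasurable
    (.of_forall fun x => hC (p x))

lemma integrable_mul {μ : Measure E} {g : E → ℝ} (hφ : IsTestFunction Ω φ) (hg : Integrable g μ) :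
    Integrable (fun x => φ x * g x) μ :=
  hφ.integrable_comp_mul measurable_id hg

end IsTestFunction

lemma exists_ae_eq_of_mutuallySingular {α : Type*} [MeasurableSpace α] {μ ν : Measure α}
    (hμν : μ ⟂ₘ ν) (f g : α → ℝ) : ∃ k, k =ᵐ[μ] f ∧ k =ᵐ[ν] g := by
  classical
  obtain ⟨s, -, hμs, hνs⟩ := hμν
  refine ⟨s.piecewise g f, ?_, ?_⟩
  · filter_upwards [measure_eq_zero_iff_ae_notMem.1 hμs] with x hx
    exact piecewise_eq_of_notMem _ _ _ hx
  · filter_upwards [measure_eq_zero_iff_ae_notMem.1 hνs] with x hx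
    exact piecewise_eq_of_mem _ _ _ (not_not.1 hx)

lemma ae_eq_zero_of_forall_isTestFunction [FiniteDimensional ℝ E] [MeasurableSpace E] [BorelSpace E]
    (hΩ : IsOpen Ω) {μ ν : Measure E} {g h : E → ℝ} (hνμ : ν ⟂ₘ μ)
    (hg : IntegrableOn g Ω μ) (hh : Integrable h ν)
    (H : ∀ φ, IsTestFunction Ω φ → ∫ x in Ω, φ x * g x ∂μ + ∫ x, φ x * h x ∂ν = 0) :
    (∀ᵐ x ∂μ.restrict Ω, g x = 0) ∧ ∀ᵐ x ∂ν.restrict Ω, h x = 0 := by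
  obtain ⟨k, hkh, hkg⟩ := exists_ae_eq_of_mutuallySingular
    (hνμ.mono_ac .rfl Measure.restrict_le_self.absolutelyContinuous) h g
  have hk : Integrable k (μ.restrict Ω + ν) :=
    (hg.congr hkg.symm).add_measure (hh.congr hkh.symm)
  have key := hΩ.ae_eq_zero_of_integral_contDiff_smul_eq_zero
    (hk.locallyIntegrable.locallyIntegrableOn Ω) fun φ hφ₁ hφ₂ hφ₃ => by
      have hφ : IsTestFunction Ω φ := ⟨hφ₁, hφ₂, hφ₃⟩
      rw [← H φ hφ]
      refine (integral_add_measure (hφ.integrable_mul hk.left_of_add_measure)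
        (hφ.integrable_mul hk.right_of_add_measure)).trans ?_
      congr 1
      · exact integral_congr_ae (EventuallyEq.rfl.mul hkg)
      · exact integral_congr_ae (EventuallyEq.rfl.mul hkh)
  rw [ae_add_measure_iff] at key
  constructor
  · filter_upwards [key.1, hkg, ae_restrict_mem hΩ.measurableSet] with x h₀ hx hxΩ
    rw [← hx, h₀ hxΩ]
  · filter_upwards [ae_restrict_of_ae key.2, ae_restrict_of_ae hkh,
      ae_restrict_mem hΩ.measurableSet] with x h₀ hx hxΩ
    rw [← hx, h₀ hxΩ]

end TestFunctions

section DistributionalDerivatives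

variable {E F : Type*} [NormedAddCommGroup E] [NormedSpace ℝ E] [MeasureSpace E]
  [NormedAddCommGroup F] [NormedSpace ℝ F] [MeasureSpace F]

/-- On `Ω`, the distributional derivative of `f` in the direction `v` is the measure
`g · volume + h · ν`, with `ν` singular with respect to `volume`. -/
structure HasDerivMeasureOn (Ω : Set E) (v : E) (f g : E → ℝ) (ν : Measure E) (h : E → ℝ) :
    Prop where
  integrable : IntegrableOn f Ω
  integrable_density : IntegrableOn g Ω
  sigmaFinite : SigmaFinite ν
  singular : ν ⟂ₘ (volume : Measure E)
  integrable_singular : Integrable h ν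
  ibp : ∀ φ, IsTestFunction Ω φ →
    ∫ x in Ω, f x * fderiv ℝ φ x v = (-∫ x in Ω, φ x * g x) - ∫ x, φ x * h x ∂ν

/-- On `Ω`, the distributional derivative of `f` in the direction `v` is a finite measure whose
absolutely continuous part has density `g`. -/
def HasBVDerivDensityOn (Ω : Set E) (v : E) (f g : E → ℝ) : Prop :=
  ∃ ν h, HasDerivMeasureOn Ω v f g ν h

variable {Ω : Set E} {v : E} {f f₁ f₂ g g₁ g₂ h h₁ h₂ : E → ℝ} {ν ν₁ ν₂ : Measure E}

namespace HasDerivMeasureOn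

lemma congr (hf : HasDerivMeasureOn Ω v f₁ g₁ ν h) (hff : f₁ =ᵐ[volume.restrict Ω] f₂)
    (hgg : g₁ =ᵐ[volume.restrict Ω] g₂) : HasDerivMeasureOn Ω v f₂ g₂ ν h where
  __ := hf
  integrable := hf.integrable.congr hff
  integrable_density := hf.integrable_density.congr hgg
  ibp φ hφ := by
    have hf₂ : ∫ x in Ω, f₂ x * fderiv ℝ φ x v = ∫ x in Ω, f₁ x * fderiv ℝ φ x v :=
      integral_congr_ae (hff.symm.mul .rfl)
    have hg₂ : ∫ x in Ω, φ x * g₂ x = ∫ x in Ω, φ x * g₁ x :=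
      integral_congr_ae (EventuallyEq.rfl.mul hgg.symm)
    rw [hf₂, hg₂, hf.ibp φ hφ]

lemma congr_singular (hf : HasDerivMeasureOn Ω v f g ν h₁) (hhh : h₁ =ᵐ[ν] h₂) :
    HasDerivMeasureOn Ω v f g ν h₂ where
  __ := hf
  integrable_singular := hf.integrable_singular.congr hhh
  ibp φ hφ := by
    have hφh : ∫ x, φ x * h₁ x ∂ν = ∫ x, φ x * h₂ x ∂ν :=
      integral_congr_ae (EventuallyEq.rfl.mul hhh)
    rw [hf.ibp φ hφ, hφh]

lemma of_zero_singular (hf : HasDerivMeasureOn Ω v f g ν₁ 0) [SigmaFinite ν₂]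
    (hν₂ : ν₂ ⟂ₘ (volume : Measure E)) : HasDerivMeasureOn Ω v f g ν₂ 0 where
  __ := hf
  sigmaFinite := ‹_›
  singular := hν₂
  integrable_singular := integrable_zero _ _ _
  ibp φ hφ := by simpa using hf.ibp φ hφ

lemma neg (hf : HasDerivMeasureOn Ω v f g ν h) : HasDerivMeasureOn Ω v (-f) (-g) ν (-h) where
  __ := hf
  integrable := hf.integrable.neg
  integrable_density := hf.integrable_density.neg
  integrable_singular := hf.integrable_singular.neg
  ibp φ hφ := by
    simp only [Pi.neg_apply, mul_neg, neg_mul, integral_neg, hf.ibp φ hφ]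
    ring

lemma of_absolutelyContinuous (hf : HasDerivMeasureOn Ω v f g ν₁ h) [SigmaFinite ν₂]
    (hν₂ : ν₂ ⟂ₘ (volume : Measure E)) (hν : ν₁ ≪ ν₂) :
    HasDerivMeasureOn Ω v f g ν₂ (fun x => (ν₁.rnDeriv ν₂ x).toReal * h x) where
  __ := hf
  sigmaFinite := ‹_›
  singular := hν₂
  integrable_singular :=
    have := hf.sigmaFinite
    (integrable_toReal_rnDeriv_mul_iff hν).2 hf.integrable_singular
  ibp φ hφ := by
    have := hf.sigmaFinite
    simp only [hf.ibp φ hφ, mul_left_comm (φ _), integral_toReal_rnDeriv_mul hν]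

variable [BorelSpace E]

lemma add (hf₁ : HasDerivMeasureOn Ω v f₁ g₁ ν h₁) (hf₂ : HasDerivMeasureOn Ω v f₂ g₂ ν h₂) :
    HasDerivMeasureOn Ω v (f₁ + f₂) (g₁ + g₂) ν (h₁ + h₂) where
  integrable := hf₁.integrable.add hf₂.integrable
  integrable_density := hf₁.integrable_density.add hf₂.integrable_density
  sigmaFinite := hf₁.sigmaFinite
  singular := hf₁.singular
  integrable_singular := hf₁.integrable_singular.add hf₂.integrable_singular
  ibp φ hφ := by
    have hdφ := hφ.fderiv_apply v
    simp only [Pi.add_apply, mul_add, add_mul]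
    simp only [mul_comm _ (fderiv ℝ φ _ v)]
    rw [integral_add (hdφ.integrable_mul hf₁.integrable) (hdφ.integrable_mul hf₂.integrable),
      integral_add (hφ.integrable_mul hf₁.integrable_density)
        (hφ.integrable_mul hf₂.integrable_density),
      integral_add (hφ.integrable_mul hf₁.integrable_singular)
        (hφ.integrable_mul hf₂.integrable_singular)]
    simp only [mul_comm (fderiv ℝ φ _ v), hf₁.ibp φ hφ, hf₂.ibp φ hφ]
    ring

lemma unique [FiniteDimensional ℝ E] (hΩ : IsOpen Ω) (hf₁ : HasDerivMeasureOn Ω v f g₁ ν h₁)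
    (hf₂ : HasDerivMeasureOn Ω v f g₂ ν h₂) :
    g₁ =ᵐ[volume.restrict Ω] g₂ ∧ h₁ =ᵐ[ν.restrict Ω] h₂ := by
  have hd := hf₁.add hf₂.neg
  have key := ae_eq_zero_of_forall_isTestFunction hΩ hd.singular hd.integrable_density
    hd.integrable_singular fun φ hφ => by
      have := hd.ibp φ hφ
      simp only [add_neg_cancel, Pi.zero_apply, zero_mul, integral_zero] at this
      linarith
  exact ⟨key.1.mono fun x hx => sub_eq_zero.1 ((sub_eq_add_neg _ _).trans hx),
    key.2.mono fun x hx => sub_eq_zero.1 ((sub_eq_add_neg _ _).trans hx)⟩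

end HasDerivMeasureOn

namespace HasBVDerivDensityOn

lemma congr (hf : HasBVDerivDensityOn Ω v f₁ g₁) (hff : f₁ =ᵐ[volume.restrict Ω] f₂)
    (hgg : g₁ =ᵐ[volume.restrict Ω] g₂) : HasBVDerivDensityOn Ω v f₂ g₂ :=
  let ⟨ν, h, hf⟩ := hf
  ⟨ν, h, hf.congr hff hgg⟩

lemma exists_common_singular (hf₁ : HasBVDerivDensityOn Ω v f₁ g₁)
    (hf₂ : HasBVDerivDensityOn Ω v f₂ g₂) :
    ∃ ν h₁ h₂, HasDerivMeasureOn Ω v f₁ g₁ ν h₁ ∧ HasDerivMeasureOn Ω v f₂ g₂ ν h₂ := by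
  obtain ⟨ν₁, h₁, hf₁⟩ := hf₁
  obtain ⟨ν₂, h₂, hf₂⟩ := hf₂
  have := hf₁.sigmaFinite
  have := hf₂.sigmaFinite
  have hν := hf₁.singular.add_left hf₂.singular
  exact ⟨ν₁ + ν₂, _, _,
    hf₁.of_absolutelyContinuous hν (Measure.le_add_right le_rfl).absolutelyContinuous,
    hf₂.of_absolutelyContinuous hν (Measure.le_add_left le_rfl).absolutelyContinuous⟩

variable [BorelSpace E]

lemma add (hf₁ : HasBVDerivDensityOn Ω v f₁ g₁) (hf₂ : HasBVDerivDensityOn Ω v f₂ g₂) :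
    HasBVDerivDensityOn Ω v (f₁ + f₂) (g₁ + g₂) :=
  let ⟨_, _, _, hf₁, hf₂⟩ := hf₁.exists_common_singular hf₂
  ⟨_, _, hf₁.add hf₂⟩

lemma sub (hf₁ : HasBVDerivDensityOn Ω v f₁ g₁) (hf₂ : HasBVDerivDensityOn Ω v f₂ g₂) :
    HasBVDerivDensityOn Ω v (f₁ - f₂) (g₁ - g₂) := by
  obtain ⟨ν, h₂, hf₂⟩ := hf₂
  simpa only [sub_eq_add_neg] using hf₁.add ⟨ν, -h₂, hf₂.neg⟩

lemma unique [FiniteDimensional ℝ E] (hΩ : IsOpen Ω) (hf₁ : HasBVDerivDensityOn Ω v f g₁)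
    (hf₂ : HasBVDerivDensityOn Ω v f g₂) : g₁ =ᵐ[volume.restrict Ω] g₂ :=
  let ⟨_, _, _, hf₁, hf₂⟩ := hf₁.exists_common_singular hf₂
  (hf₁.unique hΩ hf₂).1

end HasBVDerivDensityOn

lemma HasDerivMeasureOn.prod [BorelSpace E] [SFinite (volume : Measure E)]
    [FiniteDimensional ℝ F] [BorelSpace F] [SFinite (volume : Measure F)] {I : Set E} {J : Set F}
    {w : F} {k : E → ℝ} {f g h : F → ℝ} {ν : Measure F} [SigmaFinite (volume.restrict I)]
    (hf : HasDerivMeasureOn J w f g ν h) (hk : IntegrableOn k I) :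
    HasDerivMeasureOn (I ×ˢ J) ((0 : E), w) (fun p => k p.1 * f p.2) (fun p => k p.1 * g p.2)
      ((volume.restrict I).prod ν) (fun p => k p.1 * h p.2) := by
  have := hf.sigmaFinite
  have hvol : (volume : Measure (E × F)).restrict (I ×ˢ J)
      = (volume.restrict I).prod (volume.restrict J) := (Measure.prod_restrict I J).symm
  have mul_integral {ρ : Measure F} {r : F → ℝ} (hr : Integrable r ρ) {φ : E × F → ℝ}
      (hφ : IsTestFunction (I ×ˢ J) φ) [SFinite ρ] :
      Integrable (fun x => k x * ∫ y, φ (x, y) * r y ∂ρ) (volume.restrict I) ∧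
        ∫ p, φ p * (k p.1 * r p.2) ∂(volume.restrict I).prod ρ
          = ∫ x in I, k x * ∫ y, φ (x, y) * r y ∂ρ := by
    have hint := hφ.integrable_mul (hk.mul_prod hr)
    simp only [← integral_const_mul, mul_left_comm (k _)]
    exact ⟨hint.integral_prod_left, integral_prod _ hint⟩
  refine ⟨?_, ?_, inferInstance, ?_, hk.mul_prod hf.integrable_singular, fun φ hφ => ?_⟩
  · rw [IntegrableOn, hvol]
    exact hk.mul_prod hf.integrable
  · rw [IntegrableOn, hvol]
    exact hk.mul_prod hf.integrable_density
  · obtain ⟨s, hs, hνs, hs'⟩ := hf.singular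
    refine ⟨univ ×ˢ s, .prod .univ hs, ?_, ?_⟩
    · rw [Measure.prod_prod, hνs, mul_zero]
    · simp [Set.compl_prod_eq_union, Measure.volume_eq_prod, Measure.prod_prod, hs']
  · have hdφ := (mul_integral hf.integrable (hφ.fderiv_apply (0, w))).2
    obtain ⟨hg, hφg⟩ := mul_integral hf.integrable_density hφ
    obtain ⟨hh, hφh⟩ := mul_integral hf.integrable_singular hφ
    rw [hvol, hφg, hφh, ← integral_neg]
    refine Eq.trans ?_ (integral_sub hg.neg hh)
    simp only [mul_comm _ (fderiv ℝ φ _ _), hdφ]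
    refine integral_congr_ae (.of_forall fun x => ?_)
    have hslice := hf.ibp _ (hφ.slice x)
    simp only [hφ.fderiv_slice, mul_comm (f _)] at hslice
    simp only [hslice]
    ring

lemma HasDerivMeasureOn.map [BorelSpace E] [BorelSpace F] (L : E ≃L[ℝ] F)
    (hL : MeasurePreserving L) (hf : HasDerivMeasureOn Ω v f g ν h) :
    HasDerivMeasureOn (L.symm ⁻¹' Ω) (L v) (f ∘ L.symm) (g ∘ L.symm) (ν.map L)
      (h ∘ L.symm) := by
  let e : E ≃ᵐ F := L.toHomeomorph.toMeasurableEquiv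
  have hvol : (volume : Measure F).restrict (L.symm ⁻¹' Ω) = (volume.restrict Ω).map e := by
    have := e.restrict_map volume (L.symm ⁻¹' Ω)
    rw [show (volume : Measure E).map e = volume from hL.map_eq] at this
    rw [this]
    congr 2
    ext x
    simp [e]
  have hcomp (r : E → ℝ) : (r ∘ L.symm) ∘ e = r := by
    ext x
    simp [e]
  have := hf.sigmaFinite
  refine ⟨?_, ?_, e.sigmaFinite_map, ?_, ?_, fun φ hφ => ?_⟩
  · rw [IntegrableOn, hvol, integrable_map_equiv, hcomp]
    exact hf.integrable
  · rw [IntegrableOn, hvol, integrable_map_equiv, hcomp]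
    exact hf.integrable_density
  · rw [← hL.map_eq]
    exact e.measurableEmbedding.mutuallySingular_map hf.singular
  · exact (integrable_map_equiv e _).2 (by rw [hcomp]; exact hf.integrable_singular)
  · have key := hf.ibp (φ ∘ L) (by simpa [← preimage_comp] using hφ.comp_continuousLinearEquiv L)
    have hν (r : F → ℝ) : ∫ y, r y ∂ν.map L = ∫ x, r (L x) ∂ν := integral_map_equiv e r
    have hΩ (r : F → ℝ) : ∫ y in L.symm ⁻¹' Ω, r y = ∫ x in Ω, r (L x) := by
      rw [hvol, integral_map_equiv]
      rfl
    simp only [hν, hΩ, Function.comp_apply, L.symm_apply_apply] at key ⊢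
    simpa [L.comp_right_fderiv] using key

end DistributionalDerivatives

section BoundedVariation

lemma IsTestFunction.setIntegral_mul {E : Type*} [NormedAddCommGroup E] [NormedSpace ℝ E]
    [MeasurableSpace E] {Ω : Set E} {φ : E → ℝ} (hφ : IsTestFunction Ω φ) (g : E → ℝ)
    (μ : Measure E) : ∫ x in Ω, φ x * g x ∂μ = ∫ x, φ x * g x ∂μ :=
  setIntegral_eq_integral_of_forall_compl_eq_zero fun x hx => by
    rw [hφ.eq_zero_of_notMem hx, zero_mul]

lemma IsTestFunction.integral_deriv {U : Set ℝ} {η : ℝ → ℝ} (hη : IsTestFunction U η) :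
    ∫ t, _root_.deriv η t = 0 :=
  integral_eq_zero_of_hasDerivAt_of_integrable (fun t => (hη.differentiable t).hasDerivAt)
    (hη.deriv.contDiff.continuous.integrable_of_hasCompactSupport hη.deriv.hasCompactSupport)
    (hη.contDiff.continuous.integrable_of_hasCompactSupport hη.hasCompactSupport)

lemma integral_setIntegral_le_mul_deriv {α : Type*} [MeasurableSpace α] {τ : Measure α} [SFinite τ]
    {p h : α → ℝ} (hp : Measurable p) (hh : Integrable h τ) {η : ℝ → ℝ} (hη : ContDiff ℝ 1 η)
    (hηc : HasCompactSupport η) :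
    ∫ t, (∫ x in {x | p x ≤ t}, h x ∂τ) * deriv η t = -∫ x, η (p x) * h x ∂τ := by
  set G : ℝ → α → ℝ := fun t x => {q : ℝ × α | p q.2 ≤ q.1}.indicator
    (fun q => deriv η q.1 * h q.2) (t, x)
  have hG : Integrable (Function.uncurry G) ((volume : Measure ℝ).prod τ) :=
    (((hη.continuous_deriv le_rfl).integrable_of_hasCompactSupport hηc.deriv).mul_prod hh).indicator
      (measurableSet_le (hp.comp measurable_snd) measurable_fst)
  have hGt (t : ℝ) : ∫ x, G t x ∂τ = (∫ x in {x | p x ≤ t}, h x ∂τ) * deriv η t := by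
    rw [mul_comm, ← integral_const_mul, ← integral_indicator (measurableSet_le hp measurable_const)]
    rfl
  have hGx (x : α) : ∫ t, G t x = -(η (p x) * h x) := by
    calc ∫ t, G t x = ∫ t, (Ici (p x)).indicator (fun t => deriv η t * h x) t := rfl
      _ = (∫ t in Ioi (p x), deriv η t) * h x := by
        rw [integral_indicator measurableSet_Ici, integral_Ici_eq_integral_Ioi, integral_mul_const]
      _ = -(η (p x) * h x) := by rw [hηc.integral_Ioi_deriv_eq hη, neg_mul]
  simp only [← hGt]
  rw [integral_integral_swap hG]
  simp only [hGx, integral_neg]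

lemma integrableOn_Ioo_of_monotone {F : ℝ → ℝ} (hF : Monotone F) (A B : ℝ) :
    IntegrableOn F (Ioo A B) :=
  ((hF.monotoneOn _).integrableOn_isCompact isCompact_Icc).mono_set Ioo_subset_Icc_self

lemma ae_eq_stieltjesFunction {F : ℝ → ℝ} (hF : Monotone F) :
    F =ᵐ[volume] hF.stieltjesFunction := by
  filter_upwards [hF.countable_not_continuousAt.ae_notMem volume] with t ht
  have hcont : ContinuousAt F t := not_not.1 ht
  rw [hF.stieltjesFunction_eq]
  exact (hF.continuousWithinAt_Ioi_iff_rightLim_eq.1 hcont.continuousWithinAt).symm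

lemma isFiniteMeasure_stieltjes_restrict_Ioo (S : StieltjesFunction ℝ) (A B : ℝ) :
    IsFiniteMeasure (S.measure.restrict (Ioo A B)) :=
  isFiniteMeasure_restrict.2
    ((measure_mono Ioo_subset_Icc_self).trans_lt isCompact_Icc.measure_lt_top).ne

lemma stieltjes_restrict_Ioo_real_Iic (S : StieltjesFunction ℝ) {A B t : ℝ} (ht : t ∈ Ioo A B) :
    (S.measure.restrict (Ioo A B)).real (Iic t) = S t - S A := by
  have hIoc : Iic t ∩ Ioo A B = Ioc A t := by
    ext x
    exact ⟨fun h => ⟨h.2.1, h.1⟩, fun h => ⟨h.2, h.1, h.2.trans_lt ht.2⟩⟩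
  rw [Measure.real, Measure.restrict_apply measurableSet_Iic, hIoc, S.measure_Ioc,
    ENNReal.toReal_ofReal (sub_nonneg.2 (S.mono ht.1.le))]

lemma integral_monotone_mul_deriv {F : ℝ → ℝ} (hF : Monotone F) {A B : ℝ} {η : ℝ → ℝ}
    (hη : IsTestFunction (Ioo A B) η) :
    ∫ t in Ioo A B, F t * deriv η t = -∫ t in Ioo A B, η t ∂hF.stieltjesFunction.measure := by
  set S := hF.stieltjesFunction
  set μ := S.measure.restrict (Ioo A B)
  have : IsFiniteMeasure μ := isFiniteMeasure_stieltjes_restrict_Ioo S A B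
  have hS : ∀ᵐ t ∂volume.restrict (Ioo A B),
      μ.real (Iic t) * deriv η t = F t * deriv η t - S A * deriv η t := by
    filter_upwards [ae_restrict_of_ae (ae_eq_stieltjesFunction hF),
      ae_restrict_mem measurableSet_Ioo] with t hFt ht
    rw [hFt, ← sub_mul, stieltjes_restrict_Ioo_real_Iic S ht]
  have hcdf : ∫ t, μ.real (Iic t) * deriv η t = -∫ t, η t ∂μ := by
    simpa using! integral_setIntegral_le_mul_deriv (τ := μ) measurable_id
      (integrable_const (1 : ℝ)) (hη.contDiff.of_le (by simp)) hη.hasCompactSupport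
  have hmul {G : ℝ → ℝ} (hG : Integrable G (volume.restrict (Ioo A B))) :
      Integrable (fun t => G t * deriv η t) (volume.restrict (Ioo A B)) :=
    (hη.deriv.integrable_mul hG).congr (.of_forall fun t => mul_comm _ _)
  calc ∫ t in Ioo A B, F t * deriv η t
      = (∫ t in Ioo A B, F t * deriv η t) - ∫ t in Ioo A B, S A * deriv η t := by
        simp only [mul_comm (S A), hη.deriv.setIntegral_mul, integral_mul_const,
          hη.integral_deriv, zero_mul, sub_zero]
    _ = ∫ t in Ioo A B, μ.real (Iic t) * deriv η t := by
        rw [integral_congr_ae hS, integral_sub (hmul (integrableOn_Ioo_of_monotone hF A B))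
          (hmul (integrable_const _))]
    _ = -∫ t, η t ∂μ := by
        simpa only [mul_comm _ (deriv η _), hη.deriv.setIntegral_mul] using hcdf

lemma hasBVDerivDensityOn_of_monotone {F : ℝ → ℝ} (hF : Monotone F) (A B : ℝ) :
    HasBVDerivDensityOn (Ioo A B) 1 F (deriv F) := by
  set μ := hF.stieltjesFunction.measure.restrict (Ioo A B)
  have : IsFiniteMeasure μ := isFiniteMeasure_stieltjes_restrict_Ioo _ A B
  have hderiv : (fun t => (μ.rnDeriv volume t).toReal) =ᵐ[volume.restrict (Ioo A B)] deriv F := by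
    filter_upwards [ae_restrict_of_ae hF.ae_hasDerivAt, ae_restrict_mem measurableSet_Ioo,
      ae_restrict_of_ae (Measure.rnDeriv_restrict hF.stieltjesFunction.measure volume
        measurableSet_Ioo)] with t hFt ht hμt
    rw [hFt.deriv, hμt, indicator_of_mem ht]
  have hdensity : Integrable fun t => (μ.rnDeriv volume t).toReal :=
    Measure.integrable_toReal_rnDeriv
  refine HasBVDerivDensityOn.congr ⟨μ.singularPart volume, fun _ => 1, ?_⟩ .rfl hderiv
  refine ⟨integrableOn_Ioo_of_monotone hF A B, hdensity.integrableOn, inferInstance,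
    Measure.mutuallySingular_singularPart _ _, integrable_const _, fun η hη => ?_⟩
  have hint (ρ : Measure ℝ) [IsFiniteMeasure ρ] : Integrable η ρ := by
    simpa using hη.integrable_mul (integrable_const (1 : ℝ))
  calc ∫ t in Ioo A B, F t * fderiv ℝ η t 1
      = -∫ t, η t ∂μ := integral_monotone_mul_deriv hF hη
    _ = -(∫ t, η t ∂volume.withDensity (μ.rnDeriv volume))
          - ∫ t, η t ∂μ.singularPart volume := by
        conv_lhs => rw [Measure.haveLebesgueDecomposition_add μ volume]
        rw [integral_add_measure (hint _) (hint _)]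
        ring
    _ = (-∫ t in Ioo A B, η t * (μ.rnDeriv volume t).toReal)
          - ∫ t, η t * 1 ∂μ.singularPart volume := by
        rw [hη.setIntegral_mul, integral_withDensity_eq_integral_toReal_smul
          (Measure.measurable_rnDeriv _ _) (Measure.rnDeriv_lt_top _ _)]
        simp only [smul_eq_mul, mul_comm, mul_one]

lemma exists_monotone_eqOn_sub {α : Type*} [LinearOrder α] {f : α → ℝ} {s : Set α}
    (hf : BoundedVariationOn f s) :
    ∃ p q : α → ℝ, Monotone p ∧ Monotone q ∧ EqOn f (p - q) s := by
  rcases s.eq_empty_or_nonempty with rfl | ⟨c, hc⟩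
  · exact ⟨0, 0, monotone_const, monotone_const, eqOn_empty _ _⟩
  have exists_extension {g : α → ℝ} (hg : MonotoneOn g s) {C : ℝ} (hC : ∀ x ∈ s, |g x| ≤ C) :
      ∃ k, Monotone k ∧ EqOn g k s :=
    hg.exists_monotone_extension ⟨-C, forall_mem_image.2 fun x hx => (abs_le.1 (hC x hx)).1⟩
      ⟨C, forall_mem_image.2 fun x hx => (abs_le.1 (hC x hx)).2⟩
  have hloc := hf.locallyBoundedVariationOn
  have hvar (x : α) : |variationOnFromTo f s c x| ≤ (eVariationOn f s).toReal :=
    variationOnFromTo.abs_le_eVariationOn hf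
  have hfx (x : α) (hx : x ∈ s) : |f x| ≤ (eVariationOn f s).toReal + |f c| := by
    have := hf.dist_le hx hc
    rw [Real.dist_eq] at this
    linarith [abs_sub_abs_le_abs_sub (f x) (f c)]
  obtain ⟨p, hp, hpf⟩ := exists_extension (variationOnFromTo.monotoneOn hloc hc) fun x _ => hvar x
  obtain ⟨q, hq, hqf⟩ := exists_extension (variationOnFromTo.sub_self_monotoneOn hloc hc)
    fun x hx => (abs_sub _ _).trans (add_le_add (hvar x) (hfx x hx))
  exact ⟨p, q, hp, hq, fun x hx => by simp [← hpf hx, ← hqf hx]⟩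

lemma hasBVDerivDensityOn_of_boundedVariationOn {f : ℝ → ℝ} {A B : ℝ}
    (hf : BoundedVariationOn f (Ioo A B)) : HasBVDerivDensityOn (Ioo A B) 1 f (deriv f) := by
  obtain ⟨p, q, hp, hq, hfpq⟩ := exists_monotone_eqOn_sub hf
  refine ((hasBVDerivDensityOn_of_monotone hp A B).sub
    (hasBVDerivDensityOn_of_monotone hq A B)).congr ?_ ?_
  · exact (ae_restrict_mem measurableSet_Ioo).mono fun t ht => (hfpq ht).symm
  · filter_upwards [ae_restrict_of_ae hp.ae_differentiableAt,
      ae_restrict_of_ae hq.ae_differentiableAt, ae_restrict_mem measurableSet_Ioo] with t hpt hqt ht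
    have hft : f =ᶠ[𝓝 t] p - q := hfpq.eventuallyEq_of_mem (isOpen_Ioo.mem_nhds ht)
    rw [hft.deriv_eq, deriv_sub hpt hqt]
    rfl

lemma integrableOn_of_boundedVariationOn {f : ℝ → ℝ} {A B : ℝ}
    (hf : BoundedVariationOn f (Ioo A B)) : IntegrableOn f (Ioo A B) :=
  let ⟨_, _, hf⟩ := hasBVDerivDensityOn_of_boundedVariationOn hf
  hf.integrable

end BoundedVariation

section DuBoisReymond

lemma exists_isTestFunction_integral_eq_one {E : Type*} [NormedAddCommGroup E] [NormedSpace ℝ E]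
    [FiniteDimensional ℝ E] [MeasurableSpace E] [BorelSpace E] (μ : Measure E)
    [IsLocallyFiniteMeasure μ] [μ.IsOpenPosMeasure] {Ω : Set E} (hΩ : IsOpen Ω)
    (hne : Ω.Nonempty) : ∃ ρ, IsTestFunction Ω ρ ∧ ∫ x, ρ x ∂μ = 1 := by
  obtain ⟨c, hc⟩ := hne
  obtain ⟨r, hr, hrΩ⟩ := Metric.nhds_basis_closedBall.mem_iff.1 (hΩ.mem_nhds hc)
  let ρ : ContDiffBump c := ⟨r / 2, r, half_pos hr, half_lt_self hr⟩
  exact ⟨ρ.normed μ, ⟨ρ.contDiff_normed, ρ.hasCompactSupport_normed,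
    ρ.tsupport_normed_eq.trans_subset hrΩ⟩, ρ.integral_normed⟩

lemma exists_subset_Icc_of_isCompact {K : Set ℝ} (hK : IsCompact K) {A B : ℝ} (hAB : A < B)
    (hKAB : K ⊆ Ioo A B) : ∃ a b, A < a ∧ b < B ∧ K ⊆ Icc a b := by
  rcases K.eq_empty_or_nonempty with rfl | hne
  · exact ⟨B, A, hAB, hAB, empty_subset _⟩
  · exact ⟨sInf K, sSup K, (hKAB (hK.sInf_mem hne)).1, (hKAB (hK.sSup_mem hne)).2,
      fun x hx => ⟨csInf_le hK.bddBelow hx, le_csSup hK.bddAbove hx⟩⟩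

lemma exists_isTestFunction_deriv_eq {A B : ℝ} {ζ : ℝ → ℝ} (hζ : IsTestFunction (Ioo A B) ζ)
    (hmean : ∫ t, ζ t = 0) : ∃ η, IsTestFunction (Ioo A B) η ∧ deriv η = ζ := by
  rcases le_or_gt B A with hBA | hAB
  · have hζ0 : ζ = 0 := funext fun t => hζ.eq_zero_of_notMem (by simp [hBA])
    exact ⟨ζ, hζ, by rw [hζ0]; exact deriv_zero⟩
  obtain ⟨a, b, hAa, hbB, hab⟩ :=
    exists_subset_Icc_of_isCompact hζ.hasCompactSupport hAB hζ.tsupport_subset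
  have hζ0 (t : ℝ) (ht : t ∉ Icc a b) : ζ t = 0 :=
    image_eq_zero_of_notMem_tsupport fun h => ht (hab h)
  have hcont : Continuous ζ := hζ.contDiff.continuous
  have hderiv (t : ℝ) : HasDerivAt (fun t => ∫ s in A..t, ζ s) (ζ t) t :=
    intervalIntegral.integral_hasDerivAt_right (hcont.intervalIntegrable _ _)
      (hcont.stronglyMeasurableAtFilter _ _) hcont.continuousAt
  have hderiv_eq : deriv (fun t => ∫ s in A..t, ζ s) = ζ := funext fun t => (hderiv t).deriv
  have hsupp : Function.support (fun t => ∫ s in A..t, ζ s) ⊆ Icc a b := by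
    refine Function.support_subset_iff'.2 fun t ht => ?_
    rw [mem_Icc, not_and_or, not_le, not_le] at ht
    rcases ht with hta | hbt
    · exact intervalIntegral.integral_zero_ae (.of_forall fun s hs => hζ0 s fun h =>
        (hs.2.trans_lt (max_lt hAa hta)).not_ge h.1)
    · rcases le_or_gt A t with hAt | htA
      · rw [intervalIntegral.integral_of_le hAt, ← hmean]
        exact setIntegral_eq_integral_of_forall_compl_eq_zero fun s hs => hζ0 s fun h =>
          hs ⟨hAa.trans_le h.1, h.2.trans hbt.le⟩
      · exact intervalIntegral.integral_zero_ae (.of_forall fun s _ => hζ0 s fun h =>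
          (hbt.trans (htA.trans hAa)).not_ge (h.1.trans h.2))
  refine ⟨fun t => ∫ s in A..t, ζ s, ⟨?_, .of_support_subset_isCompact isCompact_Icc hsupp,
    (closure_minimal hsupp isClosed_Icc).trans fun t ht =>
      ⟨hAa.trans_le ht.1, ht.2.trans_lt hbB⟩⟩, hderiv_eq⟩
  rw [contDiff_infty_iff_deriv, hderiv_eq]
  exact ⟨fun t => (hderiv t).differentiableAt, hζ.contDiff⟩

lemma exists_isTestFunction_deriv_eq_sub {A B : ℝ} {ζ ρ : ℝ → ℝ}
    (hζ : IsTestFunction (Ioo A B) ζ) (hρ : IsTestFunction (Ioo A B) ρ) (hρ1 : ∫ t, ρ t = 1) :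
    ∃ η, IsTestFunction (Ioo A B) η ∧ deriv η = fun t => ζ t - (∫ s, ζ s) * ρ t := by
  have hint {φ : ℝ → ℝ} (hφ : IsTestFunction (Ioo A B) φ) : Integrable φ :=
    hφ.contDiff.continuous.integrable_of_hasCompactSupport hφ.hasCompactSupport
  refine exists_isTestFunction_deriv_eq (hζ.sub (hρ.const_mul _)) ?_
  rw [integral_sub (hint hζ) ((hint hρ).const_mul _), integral_const_mul, hρ1, mul_one, sub_self]

lemma exists_ae_eq_const_of_forall_integral_mul_deriv_eq_zero {A B : ℝ} {f : ℝ → ℝ}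
    (hf : IntegrableOn f (Ioo A B))
    (H : ∀ η, IsTestFunction (Ioo A B) η → ∫ t in Ioo A B, deriv η t * f t = 0) :
    ∃ c, ∀ᵐ t ∂volume.restrict (Ioo A B), f t = c := by
  rcases le_or_gt B A with hBA | hAB
  · exact ⟨0, by simp [hBA]⟩
  obtain ⟨ρ, hρ, hρ1⟩ := exists_isTestFunction_integral_eq_one volume isOpen_Ioo
    (nonempty_Ioo.2 hAB)
  refine ⟨∫ t in Ioo A B, ρ t * f t, ?_⟩
  have hsub := hf.sub (integrable_const (∫ t in Ioo A B, ρ t * f t))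
  refine (ae_eq_zero_of_forall_isTestFunction isOpen_Ioo (ν := 0) (h := 0) .zero_left hsub
    (integrable_zero_measure) fun ζ hζ => ?_).1.mono fun t ht => sub_eq_zero.1 ht
  obtain ⟨η, hη, hηζ⟩ := exists_isTestFunction_deriv_eq_sub hζ hρ hρ1
  have key := H η hη
  simp only [hηζ, sub_mul, mul_assoc] at key
  rw [integral_sub (hζ.integrable_mul hf) ((hρ.integrable_mul hf).const_mul _),
    integral_const_mul] at key
  simp only [integral_zero_measure, add_zero, Pi.sub_apply, mul_sub]
  rw [integral_sub (hζ.integrable_mul hf) (hζ.integrable_mul (integrable_const _)),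
    hζ.setIntegral_mul (fun _ => ∫ t in Ioo A B, ρ t * f t), integral_mul_const]
  exact key

lemma ae_eq_zero_of_forall_setIntegral_prod_eq_zero {X Y : Type*} [MeasurableSpace X]
    [MeasurableSpace Y] {μ : Measure (X × Y)} {g : X × Y → ℝ} (hg : Integrable g μ)
    (H : ∀ S T, MeasurableSet S → MeasurableSet T → ∫ p in S ×ˢ T, g p ∂μ = 0) : g =ᵐ[μ] 0 := by
  refine hg.ae_eq_of_withDensityᵥ_eq (integrable_zero _ _ _) ?_
  apply VectorMeasure.ext_of_generateFrom _ _ generateFrom_prod.symm isPiSystem_prod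
  · rw [← univ_prod_univ, withDensityᵥ_apply hg (.prod .univ .univ), H _ _ .univ .univ]
    simp
  · rintro - ⟨S, hS, T, hT, rfl⟩
    rw [withDensityᵥ_apply hg (.prod hS hT), H S T hS hT]
    simp

variable {X E F : Type*} [MeasurableSpace X] [NormedAddCommGroup E] [NormedSpace ℝ E]
  [FiniteDimensional ℝ E] [MeasurableSpace E] [BorelSpace E] [NormedAddCommGroup F]
  [NormedSpace ℝ F] [FiniteDimensional ℝ F] [MeasurableSpace F] [BorelSpace F]

lemma ae_integral_slice_eq_zero {μ : Measure X} {ν : Measure F} [SFinite μ] [SFinite ν] {U : Set F}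
    (hU : IsOpen U) {g : X × F → ℝ} (hg : Integrable g (μ.prod (ν.restrict U)))
    (H : ∀ η, IsTestFunction U η → ∫ p, η p.2 * g p ∂μ.prod (ν.restrict U) = 0) :
    ∀ᵐ y ∂ν.restrict U, ∫ x, g (x, y) ∂μ = 0 := by
  refine (ae_eq_zero_of_forall_isTestFunction hU (ν := 0) (h := 0) .zero_left
    hg.integral_prod_right integrable_zero_measure fun η hη => ?_).1
  have key := H η hη
  rw [integral_prod_symm _ (hη.integrable_comp_mul measurable_snd hg)] at key
  simpa [integral_const_mul] using key

lemma ae_eq_zero_of_forall_integral_tensor_eq_zero {μ : Measure E} {ν : Measure F} [SFinite μ]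
    [SFinite ν] {Ω : Set E} {U : Set F} (hΩ : IsOpen Ω) (hU : IsOpen U) {g : E × F → ℝ}
    (hg : Integrable g ((μ.restrict Ω).prod (ν.restrict U)))
    (H : ∀ ζ η, IsTestFunction Ω ζ → IsTestFunction U η →
      ∫ p, ζ p.1 * η p.2 * g p ∂(μ.restrict Ω).prod (ν.restrict U) = 0) :
    g =ᵐ[(μ.restrict Ω).prod (ν.restrict U)] 0 := by
  refine ae_eq_zero_of_forall_setIntegral_prod_eq_zero hg fun S T _ _ => ?_
  have hζ (ζ : E → ℝ) (hζ : IsTestFunction Ω ζ) :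
      ∀ᵐ y ∂ν.restrict U, ∫ x, ζ x * g (x, y) ∂μ.restrict Ω = 0 :=
    ae_integral_slice_eq_zero hU (hζ.integrable_comp_mul measurable_fst hg) fun η hη => by
      simpa only [mul_left_comm (η _), mul_assoc] using H ζ η hζ hη
  have hgT : Integrable (fun p : F × E => g p.swap)
      (((ν.restrict U).restrict T).prod (μ.restrict Ω)) :=
    (hg.mono_measure (Measure.prod_mono le_rfl Measure.restrict_le_self)).swap
  have hT : ∀ᵐ x ∂μ.restrict Ω, ∫ y in T, g (x, y) ∂ν.restrict U = 0 := by
    refine ae_integral_slice_eq_zero hΩ hgT fun ζ hζ' => ?_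
    rw [integral_prod _ (hζ'.integrable_comp_mul measurable_snd hgT)]
    exact integral_eq_zero_of_ae (ae_restrict_of_ae (hζ ζ hζ'))
  rw [setIntegral_prod _ hg.integrableOn]
  exact integral_eq_zero_of_ae (ae_restrict_of_ae hT)

lemma exists_ae_eq_comp_snd_of_forall_integral_deriv_tensor_eq_zero {A B : ℝ} {ν : Measure F}
    [SFinite ν] {U : Set F} (hU : IsOpen U) {v : ℝ × F → ℝ}
    (hv : Integrable v ((volume.restrict (Ioo A B)).prod (ν.restrict U)))
    (H : ∀ ζ η, IsTestFunction (Ioo A B) ζ → IsTestFunction U η →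
      ∫ p, deriv ζ p.1 * η p.2 * v p ∂(volume.restrict (Ioo A B)).prod (ν.restrict U) = 0) :
    ∃ w, IntegrableOn w U ν ∧
      ∀ᵐ p ∂(volume.restrict (Ioo A B)).prod (ν.restrict U), v p = w p.2 := by
  rcases le_or_gt B A with hBA | hAB
  · exact ⟨0, integrableOn_zero, by simp [hBA]⟩
  obtain ⟨ρ, hρ, hρ1⟩ := exists_isTestFunction_integral_eq_one volume isOpen_Ioo
    (nonempty_Ioo.2 hAB)
  have hρv := hρ.integrable_comp_mul measurable_fst hv
  have hw : IntegrableOn (fun y => ∫ t in Ioo A B, ρ t * v (t, y)) U ν := hρv.integral_prod_right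
  refine ⟨_, hw, ?_⟩
  have hw' := hw.comp_snd (volume.restrict (Ioo A B))
  refine (ae_eq_zero_of_forall_integral_tensor_eq_zero isOpen_Ioo hU (hv.sub hw')
    fun ζ η hζ hη => ?_).mono fun p hp => sub_eq_zero.1 hp
  obtain ⟨θ, hθ, hθζ⟩ := exists_isTestFunction_deriv_eq_sub hζ hρ hρ1
  have key := H θ η hθ hη
  have hηv := hη.integrable_comp_mul measurable_snd hv
  have hηw := hη.integrable_comp_mul measurable_snd hw'
  simp only [hθζ, sub_mul, mul_assoc] at key
  rw [integral_sub (hζ.integrable_comp_mul measurable_fst hηv)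
    ((hρ.integrable_comp_mul measurable_fst hηv).const_mul _), integral_const_mul] at key
  simp only [Pi.sub_apply, mul_sub, mul_assoc]
  rw [integral_sub (hζ.integrable_comp_mul measurable_fst hηv)
    (hζ.integrable_comp_mul measurable_fst hηw), ← key]
  congr 1
  have hfactor := integral_prod_mul (μ := volume.restrict (Ioo A B)) (ν := ν.restrict U) ζ
    fun y => η y * ∫ t in Ioo A B, ρ t * v (t, y)
  have hρ_swap : ∫ p, ρ p.1 * (η p.2 * v p) ∂(volume.restrict (Ioo A B)).prod (ν.restrict U)
      = ∫ y in U, η y * (∫ t in Ioo A B, ρ t * v (t, y)) ∂ν := by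
    rw [integral_prod_symm _ (hρ.integrable_comp_mul measurable_fst hηv)]
    simp only [mul_left_comm (ρ _), integral_const_mul]
  rw [hρ_swap, hfactor]
  congr 1
  simpa using hζ.setIntegral_mul (μ := volume) (fun _ => 1)

end DuBoisReymond

section BoundedVariationClosure

variable {α : Type*} [LinearOrder α] {s : Set α}

lemma boundedVariationOn_const {E : Type*} [PseudoEMetricSpace E] (c : E) :
    BoundedVariationOn (fun _ : α => c) s := by
  simp [BoundedVariationOn, eVariationOn]

lemma boundedVariationOn_add {E : Type*} [SeminormedAddCommGroup E] {f g : α → E}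
    (hf : BoundedVariationOn f s) (hg : BoundedVariationOn g s) :
    BoundedVariationOn (fun t => f t + g t) s := by
  refine ((iSup_le ?_).trans_lt (ENNReal.add_lt_top.2 ⟨hf.lt_top, hg.lt_top⟩)).ne
  rintro ⟨n, u, hu, hus⟩
  calc ∑ i ∈ Finset.range n, edist (f (u (i + 1)) + g (u (i + 1))) (f (u i) + g (u i))
      ≤ ∑ i ∈ Finset.range n,
          (edist (f (u (i + 1))) (f (u i)) + edist (g (u (i + 1))) (g (u i))) :=
        Finset.sum_le_sum fun i _ => edist_add_add_le _ _ _ _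
    _ ≤ eVariationOn f s + eVariationOn g s := by
        rw [Finset.sum_add_distrib]
        exact add_le_add (eVariationOn.sum_le hu hus) (eVariationOn.sum_le hu hus)

lemma boundedVariationOn_sub {f g : α → ℝ} (hf : BoundedVariationOn f s)
    (hg : BoundedVariationOn g s) : BoundedVariationOn (fun t => f t - g t) s := by
  simpa [sub_eq_add_neg] using
    boundedVariationOn_add hf ((boundedVariationOn_const (-1)).fun_mul hg)

lemma boundedVariationOn_setIntegral_le {X : Type*} [MeasurableSpace X] {τ : Measure X} {p : X → ℝ}
    {h : X → ℝ} (hh : Integrable h τ) (s : Set ℝ) :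
    BoundedVariationOn (fun t => ∫ x in {x | p x ≤ t}, h x ∂τ) s := by
  have of_nonneg {k : X → ℝ} (hk : Integrable k τ) (hk0 : 0 ≤ k) :
      BoundedVariationOn (fun t => ∫ x in {x | p x ≤ t}, k x ∂τ) s := by
    have hmono : Monotone fun t => ∫ x in {x | p x ≤ t}, k x ∂τ := fun t t' htt' =>
      setIntegral_mono_set hk.integrableOn (.of_forall hk0)
        (LE.le.eventuallyLE fun x (hx : p x ≤ t) => hx.trans htt')
    refine (hmono.monotoneOn s).boundedVariationOn (C := ∫ x, k x ∂τ) fun t _ => ?_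
    rw [abs_of_nonneg (integral_nonneg hk0)]
    exact setIntegral_le_integral hk (.of_forall hk0)
  convert boundedVariationOn_sub (of_nonneg hh.pos_part fun _ => le_max_right _ _)
    (of_nonneg hh.neg_part fun _ => le_max_right _ _) using 2 with t
  rw [← integral_sub hh.pos_part.integrableOn hh.neg_part.integrableOn]
  simp only [max_zero_sub_max_neg_zero_eq_self]

end BoundedVariationClosure

section ProductDomains

lemma hasDerivMeasureOn_of_contDiff {f : ℝ → ℝ} (hf : ContDiff ℝ 1 f) (A B : ℝ) :
    HasDerivMeasureOn (Ioo A B) 1 f (deriv f) 0 0 := by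
  have hint {g : ℝ → ℝ} (hg : Continuous g) : IntegrableOn g (Ioo A B) :=
    (hg.integrableOn_Icc (μ := volume)).mono_set Ioo_subset_Icc_self
  refine ⟨hint hf.continuous, hint (hf.continuous_deriv le_rfl), inferInstance, .zero_left,
    integrable_zero_measure, fun η hη => ?_⟩
  have key := integral_mul_deriv_eq_deriv_mul_of_integrable (u := f) (v := η)
    (fun t _ => (hf.differentiable one_ne_zero t).hasDerivAt)
    (fun t _ => (hη.differentiable t).hasDerivAt) ?_ ?_ ?_
  · have hη' : ∫ t in Ioo A B, f t * deriv η t = ∫ t, f t * deriv η t := by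
      simpa only [mul_comm] using hη.deriv.setIntegral_mul f volume
    simp only [fderiv_apply_one_eq_deriv, integral_zero_measure, sub_zero, hη.setIntegral_mul, hη',
      key, mul_comm]
  all_goals refine Continuous.integrable_of_hasCompactSupport ?_ ?_
  · exact hf.continuous.mul hη.deriv.contDiff.continuous
  · exact hη.deriv.hasCompactSupport.mul_left
  · exact (hf.continuous_deriv le_rfl).mul hη.contDiff.continuous
  · exact hη.hasCompactSupport.mul_left
  · exact hf.continuous.mul hη.contDiff.continuous
  · exact hη.hasCompactSupport.mul_left

section

variable {E F : Type*} [NormedAddCommGroup E] [NormedSpace ℝ E] [FiniteDimensional ℝ E]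
  [MeasureSpace E] [BorelSpace E] [SigmaFinite (volume : Measure E)] [NormedAddCommGroup F]
  [NormedSpace ℝ F] [MeasureSpace F] [BorelSpace F]
  [SigmaFinite (volume : Measure F)]

lemma HasDerivMeasureOn.prod_left {Ω : Set E} {U : Set F} {v : E} {f g h : E → ℝ} {ν : Measure E}
    {k : F → ℝ} (hf : HasDerivMeasureOn Ω v f g ν h) (hk : IntegrableOn k U) :
    HasDerivMeasureOn (Ω ×ˢ U) (v, (0 : F)) (fun p => f p.1 * k p.2) (fun p => g p.1 * k p.2)
      (ν.prod (volume.restrict U)) (fun p => h p.1 * k p.2) := by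
  have := hf.sigmaFinite
  have hmap := (hf.prod hk).map (ContinuousLinearEquiv.prodComm ℝ F E)
    Measure.measurePreserving_swap
  have hpre : (ContinuousLinearEquiv.prodComm ℝ F E).symm ⁻¹' (U ×ˢ Ω) = Ω ×ˢ U := by
    ext p
    exact and_comm
  have hν : ((volume.restrict U).prod ν).map (ContinuousLinearEquiv.prodComm ℝ F E)
      = ν.prod (volume.restrict U) := Measure.prod_swap
  have hmul (r : E → ℝ) : (fun p : F × E => k p.1 * r p.2) ∘
      (ContinuousLinearEquiv.prodComm ℝ F E).symm = fun p => r p.1 * k p.2 :=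
    funext fun p => mul_comm _ _
  rw [hpre, hν, hmul, hmul, hmul] at hmap
  exact hmap

lemma hasDerivMeasureOn_affine_fst {A B : ℝ} {U : Set F} {a b : F → ℝ} (ha : IntegrableOn a U)
    (hb : IntegrableOn b U) {ν : Measure (ℝ × F)} [SigmaFinite ν] (hν : ν ⟂ₘ volume) :
    HasDerivMeasureOn (Ioo A B ×ˢ U) ((1 : ℝ), (0 : F)) (fun p => p.1 * a p.2 + b p.2)
      (fun p => a p.2) ν 0 := by
  have hid := (hasDerivMeasureOn_of_contDiff contDiff_id A B).prod_left ha
  have hone := (hasDerivMeasureOn_of_contDiff (contDiff_const (c := 1)) A B).prod_left hb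
  simp only [Pi.zero_apply, zero_mul, deriv_id, deriv_const, one_mul] at hid hone
  simpa [Pi.add_def] using (hid.of_zero_singular hν).add (hone.of_zero_singular hν)

lemma hasBVDerivDensityOn_affine_fst {A B C D : ℝ} {a b : ℝ → ℝ}
    (ha : BoundedVariationOn a (Ioo C D)) (hb : BoundedVariationOn b (Ioo C D)) :
    HasBVDerivDensityOn (Ioo A B ×ˢ Ioo C D) ((0 : ℝ), (1 : ℝ)) (fun p => p.1 * a p.2 + b p.2)
      (fun p => p.1 * deriv a p.2 + deriv b p.2) := by
  obtain ⟨_, _, ha⟩ := hasBVDerivDensityOn_of_boundedVariationOn ha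
  obtain ⟨_, _, hb⟩ := hasBVDerivDensityOn_of_boundedVariationOn hb
  have hid : IntegrableOn id (Ioo A B) :=
    (continuous_id.integrableOn_Icc (μ := volume)).mono_set Ioo_subset_Icc_self
  have hone : IntegrableOn (fun _ => (1 : ℝ)) (Ioo A B) := integrable_const _
  simpa [Pi.add_def] using
    HasBVDerivDensityOn.add ⟨_, _, ha.prod hid⟩ ⟨_, _, hb.prod hone⟩

lemma HasDerivMeasureOn.exists_ae_eq_affine_fst [FiniteDimensional ℝ F] {A B : ℝ} {U : Set F}
    (hU : IsOpen U) {f : ℝ × F → ℝ} {a : F → ℝ} {ν : Measure (ℝ × F)}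
    (hf : HasDerivMeasureOn (Ioo A B ×ˢ U) ((1 : ℝ), (0 : F)) f (fun p => a p.2) ν 0)
    (ha : IntegrableOn a U) :
    ∃ b, IntegrableOn b U ∧ ∀ᵐ p ∂volume.restrict (Ioo A B ×ˢ U), f p = p.1 * a p.2 + b p.2 := by
  have := hf.sigmaFinite
  have hvol : (volume : Measure (ℝ × F)).restrict (Ioo A B ×ˢ U)
      = (volume.restrict (Ioo A B)).prod (volume.restrict U) := (Measure.prod_restrict _ _).symm
  have hsub := hf.add (hasDerivMeasureOn_affine_fst ha integrableOn_zero hf.singular).neg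
  have hint := hsub.integrable
  rw [IntegrableOn, hvol] at hint
  obtain ⟨b, hb, hfb⟩ := exists_ae_eq_comp_snd_of_forall_integral_deriv_tensor_eq_zero hU hint
    fun ζ η hζ hη => by
      simpa [hζ.fderiv_tensor hη, hvol, mul_comm] using hsub.ibp _ (hζ.tensor hη)
  rw [hvol]
  refine ⟨b, hb, hfb.mono fun p hp => ?_⟩
  simp only [Pi.add_apply, Pi.neg_apply, add_zero] at hp
  linarith

end

lemma HasDerivMeasureOn.setIntegral_deriv_mul_comp_snd {A B C D : ℝ} {ρ η w : ℝ → ℝ}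
    {g h k : ℝ × ℝ → ℝ} {ν : Measure (ℝ × ℝ)}
    (hw : HasDerivMeasureOn (Ioo A B ×ˢ Ioo C D) ((0 : ℝ), (1 : ℝ)) (fun p => w p.2) g ν h)
    (hkg : k =ᵐ[volume.restrict (Ioo A B ×ˢ Ioo C D)] g) (hkh : k =ᵐ[ν] h)
    (hρ : IsTestFunction (Ioo A B) ρ) (hρ1 : ∫ s, ρ s = 1) (hη : IsTestFunction (Ioo C D) η) :
    ∫ t in Ioo C D, deriv η t * w t
      = -∫ p, η p.2 * (ρ p.1 * k p) ∂(volume.restrict (Ioo A B ×ˢ Ioo C D) + ν) := by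
  have hρη := hρ.tensor hη
  have hρ1' : ∫ s in Ioo A B, ρ s = 1 := by
    simpa [hρ1] using hρ.setIntegral_mul (fun _ => 1) volume
  have mul_congr {τ : Measure (ℝ × ℝ)} {r : ℝ × ℝ → ℝ} (hkr : k =ᵐ[τ] r) :
      ∫ p, ρ p.1 * η p.2 * k p ∂τ = ∫ p, ρ p.1 * η p.2 * r p ∂τ :=
    integral_congr_ae (EventuallyEq.rfl.mul hkr)
  calc ∫ t in Ioo C D, deriv η t * w t
      = ∫ p in Ioo A B ×ˢ Ioo C D, ρ p.1 * (deriv η p.2 * w p.2) := by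
        rw [Measure.volume_eq_prod, setIntegral_prod_mul ρ fun t => deriv η t * w t, hρ1', one_mul]
    _ = ∫ p in Ioo A B ×ˢ Ioo C D,
          w p.2 * fderiv ℝ (fun p : ℝ × ℝ => ρ p.1 * η p.2) p (0, 1) := by
        congr with p
        simp only [hρ.fderiv_tensor hη, map_zero, fderiv_apply_one_eq_deriv]
        ring
    _ = -((∫ p in Ioo A B ×ˢ Ioo C D, ρ p.1 * η p.2 * k p) + ∫ p, ρ p.1 * η p.2 * k p ∂ν) := by
        rw [hw.ibp _ hρη, mul_congr hkg, mul_congr hkh]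
        ring
    _ = -∫ p, η p.2 * (ρ p.1 * k p) ∂(volume.restrict (Ioo A B ×ˢ Ioo C D) + ν) := by
        rw [← integral_add_measure (hρη.integrable_mul (hw.integrable_density.congr hkg.symm))
          (hρη.integrable_mul (hw.integrable_singular.congr hkh.symm))]
        simp only [mul_comm, mul_left_comm]

lemma HasBVDerivDensityOn.exists_boundedVariationOn_ae_eq {A B C D : ℝ} (hAB : A < B) {w : ℝ → ℝ}
    {g : ℝ × ℝ → ℝ} (hw : IntegrableOn w (Ioo C D))
    (hwg : HasBVDerivDensityOn (Ioo A B ×ˢ Ioo C D) ((0 : ℝ), (1 : ℝ)) (fun p => w p.2) g) :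
    ∃ b, BoundedVariationOn b (Ioo C D) ∧ w =ᵐ[volume.restrict (Ioo C D)] b := by
  obtain ⟨ν, h, hwg⟩ := hwg
  have := hwg.sigmaFinite
  obtain ⟨ρ, hρ, hρ1⟩ := exists_isTestFunction_integral_eq_one volume isOpen_Ioo
    (nonempty_Ioo.2 hAB)
  set μ := (volume : Measure (ℝ × ℝ)).restrict (Ioo A B ×ˢ Ioo C D)
  obtain ⟨k, hkh, hkg⟩ := exists_ae_eq_of_mutuallySingular
    (hwg.singular.mono_ac .rfl Measure.restrict_le_self.absolutelyContinuous : ν ⟂ₘ μ) h g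
  have hk : Integrable (fun p => ρ p.1 * k p) (μ + ν) := hρ.integrable_comp_mul measurable_fst
    ((hwg.integrable_density.congr hkg.symm).add_measure (hwg.integrable_singular.congr hkh.symm))
  -- `c` is the distribution function of the `x₂`-marginal of `ρ(x₁) ∂₂w`.
  set c : ℝ → ℝ := fun t => ∫ p in {p : ℝ × ℝ | p.2 ≤ t}, ρ p.1 * k p ∂(μ + ν)
  have hc : BoundedVariationOn c (Ioo C D) := boundedVariationOn_setIntegral_le hk _
  have hcint : IntegrableOn c (Ioo C D) := integrableOn_of_boundedVariationOn hc
  have hweak (η : ℝ → ℝ) (hη : IsTestFunction (Ioo C D) η) :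
      ∫ t in Ioo C D, deriv η t * w t = ∫ t in Ioo C D, deriv η t * c t := by
    rw [hwg.setIntegral_deriv_mul_comp_snd hkg hkh hρ hρ1 hη, hη.deriv.setIntegral_mul,
      ← integral_setIntegral_le_mul_deriv measurable_snd hk (hη.contDiff.of_le (by simp))
        hη.hasCompactSupport]
    simp only [c, mul_comm]
  obtain ⟨d, hd⟩ := exists_ae_eq_const_of_forall_integral_mul_deriv_eq_zero (hw.sub hcint)
    fun η hη => by
      simp only [Pi.sub_apply, mul_sub]
      rw [integral_sub (hη.deriv.integrable_mul hw) (hη.deriv.integrable_mul hcint), hweak η hη,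
        sub_self]
  refine ⟨fun t => c t + d, boundedVariationOn_add hc (boundedVariationOn_const d),
    hd.mono fun t ht => ?_⟩
  simp only [Pi.sub_apply] at ht
  linarith

lemma HasDerivMeasureOn.exists_boundedVariationOn_ae_eq_affine_fst {A B C D : ℝ} (hAB : A < B)
    {a : ℝ → ℝ} {f g : ℝ × ℝ → ℝ} {ν : Measure (ℝ × ℝ)}
    (hf : HasDerivMeasureOn (Ioo A B ×ˢ Ioo C D) ((1 : ℝ), (0 : ℝ)) f (fun p => a p.2) ν 0)
    (ha : BoundedVariationOn a (Ioo C D))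
    (hfg : HasBVDerivDensityOn (Ioo A B ×ˢ Ioo C D) ((0 : ℝ), (1 : ℝ)) f g) :
    ∃ b, BoundedVariationOn b (Ioo C D) ∧
      ∀ᵐ p ∂volume.restrict (Ioo A B ×ˢ Ioo C D), f p = p.1 * a p.2 + b p.2 := by
  obtain ⟨w, hw, hfw⟩ := hf.exists_ae_eq_affine_fst isOpen_Ioo
    (integrableOn_of_boundedVariationOn ha)
  have hsub := (hfg.sub (hasBVDerivDensityOn_affine_fst ha (boundedVariationOn_const 0))).congr
    (f₂ := fun p => w p.2) (hfw.mono fun p hp => by simp [hp]) .rfl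
  obtain ⟨b, hb, hwb⟩ := hsub.exists_boundedVariationOn_ae_eq hAB hw
  refine ⟨b, hb, ?_⟩
  rw [Measure.volume_eq_prod, ← Measure.prod_restrict] at hfw ⊢
  filter_upwards [hfw, Measure.quasiMeasurePreserving_snd.ae hwb] with p hp hwp
  rw [hp, hwp]

end ProductDomains

section Rectangles

/-- The rectangle with first coordinate in `I` and second coordinate in `J`. -/
def rectangle (I J : Set ℝ) : Set V2 := {x | x 0 ∈ I ∧ x 1 ∈ J}

variable {A B C D : ℝ} {I J : Set ℝ}

lemma measurableSet_rectangle (hI : MeasurableSet I) (hJ : MeasurableSet J) :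
    MeasurableSet (rectangle I J) :=
  (measurable_pi_apply 0 hI).inter (measurable_pi_apply 1 hJ)

lemma ae_map_finTwoArrow_iff {P : V2 → Prop} {μ : Measure V2} :
    (∀ᵐ p ∂μ.map (ContinuousLinearEquiv.finTwoArrow ℝ ℝ), P ![p.1, p.2]) ↔ ∀ᵐ x ∂μ, P x := by
  have he := (MeasurableEquiv.finTwoArrow (α := ℝ)).measurableEmbedding
  exact he.ae_map_iff.trans (eventually_congr (.of_forall fun x =>
    iff_of_eq (congrArg P (MeasurableEquiv.finTwoArrow.symm_apply_apply x))))

lemma ae_restrict_rectangle_iff {P : V2 → Prop} :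
    (∀ᵐ x ∂volume.restrict (rectangle I J), P x) ↔
      ∀ᵐ p ∂volume.restrict (I ×ˢ J), P ![p.1, p.2] := by
  rw [← ((volume_preserving_finTwoArrow ℝ).restrict_preimage_emb
    (MeasurableEquiv.finTwoArrow (α := ℝ)).measurableEmbedding (I ×ˢ J)).map_eq]
  exact ae_map_finTwoArrow_iff.symm

lemma ae_rectangle_of_ae {P : ℝ → Prop} (hP : ∀ᵐ t ∂volume.restrict J, P t) :
    ∀ᵐ x ∂volume.restrict (rectangle I J), P (x 1) := by
  rw [ae_restrict_rectangle_iff, Measure.volume_eq_prod, ← Measure.prod_restrict]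
  exact Measure.quasiMeasurePreserving_snd.ae hP

lemma exists_ne_ae_of_ae_rectangle (hAB : A < B) {P : V2 → Prop}
    (hP : ∀ᵐ x ∂volume.restrict (rectangle (Ioo A B) J), P x) :
    ∃ s₁ s₂, s₁ ≠ s₂ ∧ ∀ᵐ t ∂volume.restrict J, P ![s₁, t] ∧ P ![s₂, t] := by
  rw [ae_restrict_rectangle_iff, Measure.volume_eq_prod, ← Measure.prod_restrict] at hP
  have hslice := Measure.ae_ae_of_ae_prod hP
  have exists_mem {a b : ℝ} (hab : a < b) (h : Ioo a b ⊆ Ioo A B) :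
      ∃ s ∈ Ioo a b, ∀ᵐ t ∂volume.restrict J, P ![s, t] := by
    have : (ae (volume.restrict (Ioo a b))).NeBot := by
      rw [ae_neBot, Ne, Measure.restrict_eq_zero]
      simp [hab]
    exact ((ae_restrict_mem measurableSet_Ioo).and
      (ae_restrict_of_ae_restrict_of_subset h hslice)).exists
  obtain ⟨m, hAm, hmB⟩ := exists_between hAB
  obtain ⟨s₁, hs₁, hP₁⟩ := exists_mem hAm (Ioo_subset_Ioo_right hmB.le)
  obtain ⟨s₂, hs₂, hP₂⟩ := exists_mem hmB (Ioo_subset_Ioo_left hAm.le)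
  exact ⟨s₁, s₂, (hs₁.2.trans hs₂.1).ne, hP₁.and hP₂⟩

lemma abs_le_mnorm (M : Mat2) (i j : Fin 2) : |M i j| ≤ mnorm M :=
  Real.abs_le_sqrt <|
    (Finset.single_le_sum (f := fun l => M i l ^ 2) (fun _ _ => sq_nonneg _)
      (Finset.mem_univ j)).trans
    (Finset.single_le_sum (f := fun k => ∑ l, M k l ^ 2)
      (fun _ _ => Finset.sum_nonneg fun _ _ => sq_nonneg _) (Finset.mem_univ i))

variable {u : V2 → V2} {gu gs : V2 → Mat2} {σ : Measure V2}

lemma HasBVDerivOn.hasDerivMeasureOn {Ω : Set V2} (h : HasBVDerivOn Ω u gu σ gs) (i j : Fin 2) :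
    HasDerivMeasureOn Ω (Pi.single j 1) (fun x => u x i) (fun x => gu x i j) σ
      (fun x => gs x i j) := by
  have : IsFiniteMeasure σ := ⟨h.fin.lt_top⟩
  have hgs : ∀ᵐ x ∂σ, ‖gs x i j‖ ≤ 1 := h.unit.mono fun x hx => hx ▸ abs_le_mnorm (gs x) i j
  exact ⟨h.int_u.eval i, h.int_gu i j, inferInstance, h.perp,
    .of_bound (h.meas_gs i j).aestronglyMeasurable 1 hgs,
    fun φ hφ => h.ibp φ hφ.contDiff hφ.hasCompactSupport hφ.tsupport_subset i j⟩

lemma HasBVDerivOn.hasDerivMeasureOn_fst (h : HasBVDerivOn (rectangle I J) u gu σ gs)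
    (i : Fin 2) :
    HasDerivMeasureOn (I ×ˢ J) ((1 : ℝ), (0 : ℝ)) (fun p => u ![p.1, p.2] i)
      (fun p => gu ![p.1, p.2] i 0) (σ.map (ContinuousLinearEquiv.finTwoArrow ℝ ℝ))
      (fun p => gs ![p.1, p.2] i 0) :=
  (h.hasDerivMeasureOn i 0).map (ContinuousLinearEquiv.finTwoArrow ℝ ℝ)
    (volume_preserving_finTwoArrow ℝ)

lemma HasBVDerivOn.hasDerivMeasureOn_snd (h : HasBVDerivOn (rectangle I J) u gu σ gs)
    (i : Fin 2) :
    HasDerivMeasureOn (I ×ˢ J) ((0 : ℝ), (1 : ℝ)) (fun p => u ![p.1, p.2] i)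
      (fun p => gu ![p.1, p.2] i 1) (σ.map (ContinuousLinearEquiv.finTwoArrow ℝ ℝ))
      (fun p => gs ![p.1, p.2] i 1) :=
  (h.hasDerivMeasureOn i 1).map (ContinuousLinearEquiv.finTwoArrow ℝ ℝ)
    (volume_preserving_finTwoArrow ℝ)

lemma HasBVDerivOn.restrict_map_finTwoArrow (h : HasBVDerivOn (rectangle I J) u gu σ gs) :
    (σ.map (ContinuousLinearEquiv.finTwoArrow ℝ ℝ)).restrict (I ×ˢ J)
      = σ.map (ContinuousLinearEquiv.finTwoArrow ℝ ℝ) := by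
  conv_rhs => rw [← Measure.restrict_eq_self_of_ae_mem (μ := σ) h.conc]
  exact (MeasurableEquiv.finTwoArrow (α := ℝ)).measurableEmbedding.restrict_map σ (I ×ˢ J)

lemma HasBVDerivOn.ae_deriv_of_affine_fst {a b : ℝ → ℝ} {i : Fin 2}
    (h : HasBVDerivOn (rectangle (Ioo A B) (Ioo C D)) u gu σ gs)
    (ha : BoundedVariationOn a (Ioo C D)) (hb : BoundedVariationOn b (Ioo C D))
    (hu : ∀ᵐ x ∂volume.restrict (rectangle (Ioo A B) (Ioo C D)), u x i = x 0 * a (x 1) + b (x 1)) :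
    (∀ᵐ x ∂volume.restrict (rectangle (Ioo A B) (Ioo C D)),
        gu x i 0 = a (x 1) ∧ gu x i 1 = x 0 * deriv a (x 1) + deriv b (x 1)) ∧
      ∀ᵐ x ∂σ, gs x i 0 = 0 := by
  have hopen : IsOpen (Ioo A B ×ˢ Ioo C D) := isOpen_Ioo.prod isOpen_Ioo
  have hu' := ae_restrict_rectangle_iff.1 hu
  have hfst := (h.hasDerivMeasureOn_fst i).congr hu' .rfl
  have hsnd : HasBVDerivDensityOn (Ioo A B ×ˢ Ioo C D) ((0 : ℝ), (1 : ℝ)) _ _ :=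
    ⟨_, _, (h.hasDerivMeasureOn_snd i).congr hu' .rfl⟩
  have := hfst.sigmaFinite
  obtain ⟨hg, hs⟩ := hfst.unique hopen (hasDerivMeasureOn_affine_fst
    (integrableOn_of_boundedVariationOn ha) (integrableOn_of_boundedVariationOn hb) hfst.singular)
  rw [h.restrict_map_finTwoArrow] at hs
  have hg' := hsnd.unique hopen (hasBVDerivDensityOn_affine_fst ha hb)
  exact ⟨ae_restrict_rectangle_iff.2 (hg.and hg'), ae_map_finTwoArrow_iff.1 hs⟩

lemma HasBVDerivOn.exists_ae_eq_affine_fst {a : ℝ → ℝ} {i : Fin 2} (hAB : A < B)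
    (h : HasBVDerivOn (rectangle (Ioo A B) (Ioo C D)) u gu σ gs)
    (ha : BoundedVariationOn a (Ioo C D))
    (hg : ∀ᵐ x ∂volume.restrict (rectangle (Ioo A B) (Ioo C D)), gu x i 0 = a (x 1))
    (hs : ∀ᵐ x ∂σ, gs x i 0 = 0) :
    ∃ b, BoundedVariationOn b (Ioo C D) ∧
      ∀ᵐ x ∂volume.restrict (rectangle (Ioo A B) (Ioo C D)), u x i = x 0 * a (x 1) + b (x 1) := by
  have hfst := ((h.hasDerivMeasureOn_fst i).congr .rfl
    (ae_restrict_rectangle_iff.1 hg)).congr_singular (ae_map_finTwoArrow_iff.2 hs)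
  obtain ⟨b, hb, hub⟩ := hfst.exists_boundedVariationOn_ae_eq_affine_fst hAB ha
    ⟨_, _, h.hasDerivMeasureOn_snd i⟩
  exact ⟨b, hb, ae_restrict_rectangle_iff.2 hub⟩

end Rectangles

section PlanarRotations

variable {R M : Mat2}

lemma mulVec_fin_two_apply (M : Mat2) (x : V2) (i : Fin 2) :
    M.mulVec x i = M i 0 * x 0 + M i 1 * x 1 := by
  simp only [Matrix.mulVec, dotProduct, Fin.sum_univ_two]

lemma mulVec_e1_apply (M : Mat2) (i : Fin 2) : M.mulVec e1 i = M i 0 := by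
  simp [mulVec_fin_two_apply, e1]

lemma mulVec_e2_apply (M : Mat2) (i : Fin 2) : M.mulVec e2 i = M i 1 := by
  simp [mulVec_fin_two_apply, e2]

lemma dot_mulVec_add (M : Mat2) (x v w : V2) :
    dot (M.mulVec x + v) w
      = x 0 * dot (M.mulVec e1) w + x 1 * dot (M.mulVec e2) w + dot v w := by
  simp only [dot, Fin.sum_univ_two, mulVec_e1_apply, mulVec_e2_apply, Pi.add_apply,
    mulVec_fin_two_apply M x]
  ring

lemma mul_one_add_smul_outer (R : Mat2) (c : ℝ) :
    R * (1 + c • outer e1 e2) = R + outer (c • R.mulVec e1) e2 := by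
  change R * (1 + c • Matrix.vecMulVec e1 e2) = R + Matrix.vecMulVec (c • R.mulVec e1) e2
  rw [mul_add, mul_one, Matrix.mul_smul, Matrix.mul_vecMulVec, Matrix.smul_vecMulVec]

lemma entries_of_mem_SO2 (hR : R ∈ SO2) :
    R 1 1 = R 0 0 ∧ R 0 1 = -R 1 0 ∧ R 0 0 ^ 2 + R 1 0 ^ 2 = 1 := by
  have hinv : R.adjugate = R.transpose := by
    calc R.adjugate = R.adjugate * (R * R.transpose) := by rw [hR.1, mul_one]
      _ = R.transpose := by rw [← mul_assoc, Matrix.adjugate_mul, hR.2, one_smul, one_mul]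
  rw [Matrix.adjugate_fin_two] at hinv
  have h₁₁ : R 1 1 = R 0 0 := congrFun₂ hinv 0 0
  have h₀₁ : -R 0 1 = R 1 0 := congrFun₂ hinv 0 1
  have hdet := hR.2
  rw [Matrix.det_fin_two] at hdet
  exact ⟨h₁₁, by linarith, by linear_combination hdet - R 0 0 * h₁₁ - R 1 0 * h₀₁⟩

lemma abs_apply_le_one_of_mem_SO2 (hR : R ∈ SO2) (i j : Fin 2) : |R i j| ≤ 1 := by
  have hdiag : ∑ l, R i l ^ 2 = 1 := by
    simpa [Matrix.mul_apply, sq] using congrFun₂ hR.1 i i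
  rw [← sq_le_one_iff_abs_le_one, ← hdiag]
  exact Finset.single_le_sum (f := fun l => R i l ^ 2) (fun _ _ => sq_nonneg _) (Finset.mem_univ j)

lemma det_add_outer_e2 (hR : R ∈ SO2) (d : V2) :
    (R + outer d e2).det = 1 + dot d (R.mulVec e2) := by
  obtain ⟨h₁₁, h₀₁, hsq⟩ := entries_of_mem_SO2 hR
  simp only [Matrix.det_fin_two, Matrix.add_apply, outer, Matrix.of_apply, dot, Fin.sum_univ_two,
    mulVec_e2_apply, h₁₁, h₀₁]
  simp only [e2, Matrix.cons_val_zero, Matrix.cons_val_one]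
  linear_combination hsq

lemma dot_smul_mulVec_e1_mulVec_e2 (hR : R ∈ SO2) (c : ℝ) :
    dot (c • R.mulVec e1) (R.mulVec e2) = 0 := by
  obtain ⟨h₁₁, h₀₁, -⟩ := entries_of_mem_SO2 hR
  simp only [dot, Fin.sum_univ_two, Pi.smul_apply, smul_eq_mul, mulVec_e1_apply, mulVec_e2_apply,
    h₁₁, h₀₁]
  ring

lemma eq_smul_mulVec_e1 (hR : R ∈ SO2) {d : V2} (hd : dot d (R.mulVec e2) = 0) :
    d = dot d (R.mulVec e1) • R.mulVec e1 := by
  obtain ⟨h₁₁, h₀₁, hsq⟩ := entries_of_mem_SO2 hR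
  simp only [dot, Fin.sum_univ_two, mulVec_e2_apply, h₁₁, h₀₁] at hd
  ext i
  simp only [dot, Fin.sum_univ_two, Pi.smul_apply, smul_eq_mul, mulVec_e1_apply]
  fin_cases i <;> simp only [Fin.zero_eta, Fin.mk_one]
  · linear_combination (-d 0) * hsq - R 1 0 * hd
  · linear_combination (-d 1) * hsq + R 0 0 * hd

lemma transpose_mul_mDeriv_antisymm {J : Set ℝ} {R : ℝ → Mat2} {t : ℝ} (hJ : J ∈ 𝓝 t)
    (hR : ∀ s ∈ J, R s ∈ SO2) (hd : ∀ i j, DifferentiableAt ℝ (fun s => R s i j) t) :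
    ((R t).transpose * mDeriv R t).transpose = -((R t).transpose * mDeriv R t) := by
  ext i j
  have hderiv := HasDerivAt.fun_sum (u := Finset.univ) fun k _ =>
    (hd k i).hasDerivAt.fun_mul (hd k j).hasDerivAt
  have hconst : (fun s => ∑ k, R s k i * R s k j) =ᶠ[𝓝 t] fun _ => (1 : Mat2) i j := by
    filter_upwards [hJ] with s hs
    have hRR : (R s).transpose * R s = 1 := mul_eq_one_comm.1 (hR s hs).1
    exact congrFun₂ hRR i j
  have hzero := hderiv.unique ((hasDerivAt_const t _).congr_of_eventuallyEq hconst)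
  rw [Finset.sum_add_distrib] at hzero
  simp only [Matrix.transpose_apply, Matrix.neg_apply, Matrix.mul_apply, mDeriv, Matrix.of_apply]
  simp only [mul_comm (R t _ j)]
  linarith

lemma dot_mulVec_e2_eq_zero_of_antisymm
    (hM : (R.transpose * M).transpose = -(R.transpose * M)) :
    dot (M.mulVec e2) (R.mulVec e2) = 0 := by
  have h := congrFun₂ hM 1 1
  simp only [Matrix.transpose_apply, Matrix.neg_apply, Matrix.mul_apply, Fin.sum_univ_two] at h
  simp only [dot, Fin.sum_univ_two, mulVec_e2_apply]
  linarith

lemma eq_zero_of_antisymm_of_dot_eq_zero (hR : R ∈ SO2)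
    (hM : (R.transpose * M).transpose = -(R.transpose * M))
    (h : dot (M.mulVec e1) (R.mulVec e2) = 0) : M = 0 := by
  have h₁₀ : (R.transpose * M) 1 0 = 0 := by
    simpa [Matrix.mul_apply, dot, mulVec_e1_apply, mulVec_e2_apply, mul_comm] using h
  have hRM : R.transpose * M = 0 := by
    have hM' (i j : Fin 2) := congrFun₂ hM i j
    simp only [Matrix.transpose_apply, Matrix.neg_apply] at hM'
    ext i j
    fin_cases i <;> fin_cases j <;>
      simp only [Fin.zero_eta, Fin.mk_one, Matrix.zero_apply] <;>
      linarith [hM' 0 0, hM' 0 1, hM' 1 1]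
  calc M = R * R.transpose * M := by rw [hR.1, one_mul]
    _ = 0 := by rw [mul_assoc, hRM, mul_zero]

end PlanarRotations

section BoundedVariationComponents

variable {s : Set ℝ}

lemma boundedVariationOn_euclideanSpace_apply {α ι : Type*} [LinearOrder α] [Fintype ι]
    {s : Set α} {f : α → EuclideanSpace ℝ ι} (hf : BoundedVariationOn f s) (i : ι) :
    BoundedVariationOn (fun t => f t i) s :=
  (EuclideanSpace.proj i : EuclideanSpace ℝ ι →L[ℝ] ℝ).lipschitz.comp_boundedVariationOn hf

lemma BVm.apply {R : ℝ → Mat2} (hR : BVm R s) (i j : Fin 2) :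
    BoundedVariationOn (fun t => R t i j) s := by
  simpa [mToE] using boundedVariationOn_euclideanSpace_apply hR (i, j)

lemma BVv.apply {ψ : ℝ → V2} (hψ : BVv ψ s) (i : Fin 2) :
    BoundedVariationOn (fun t => ψ t i) s := by
  simpa [vToE] using boundedVariationOn_euclideanSpace_apply hψ i

lemma BVv.of_apply {ψ : ℝ → V2} (hψ : ∀ i, BoundedVariationOn (fun t => ψ t i) s) : BVv ψ s := by
  have hsingle (i : Fin 2) : BoundedVariationOn (fun t => ψ t i • vToE (Pi.single i 1)) s :=
    (ContinuousLinearMap.toSpanSingleton ℝ _).lipschitz.comp_boundedVariationOn (hψ i)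
  have hsum : (fun t => vToE (ψ t))
      = fun t => ψ t 0 • vToE (Pi.single 0 1) + ψ t 1 • vToE (Pi.single 1 1) := by
    ext t i
    fin_cases i <;> simp [vToE]
  rw [BVv, hsum]
  exact boundedVariationOn_add (hsingle 0) (hsingle 1)

lemma ae_differentiableAt_of_boundedVariationOn {f : ℝ → ℝ} (hs : IsOpen s)
    (hf : BoundedVariationOn f s) : ∀ᵐ t ∂volume.restrict s, DifferentiableAt ℝ f t := by
  filter_upwards [hf.locallyBoundedVariationOn.ae_differentiableWithinAt hs.measurableSet,
    ae_restrict_mem hs.measurableSet] with t hft ht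
  exact hft.differentiableAt (hs.mem_nhds ht)

lemma boundedVariationOn_id_Ioo (C D : ℝ) : BoundedVariationOn (fun t : ℝ => t) (Ioo C D) :=
  (monotone_id.monotoneOn _).boundedVariationOn (C := max |C| |D|) fun _ ht =>
    abs_le_max_abs_abs ht.1.le ht.2.le

end BoundedVariationComponents

section LayeredRigidMotions

/-- `u(x) = R(x₂)x + ψ(x₂)` a.e. in `Ω` with `R ∈ BV(J;SO(2))` and `ψ ∈ BV(J;ℝ²)`, the
representation shared by the two descriptions of the class `A`. -/
structure IsLayeredRigidMotion (Ω : Set V2) (J : Set ℝ) (u : V2 → V2) (R : ℝ → Mat2)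
    (ψ : ℝ → V2) : Prop where
  mem_SO2 : ∀ t ∈ J, R t ∈ SO2
  bvm : BVm R J
  bvv : BVv ψ J
  ae_eq : ∀ᵐ x ∂volume.restrict Ω, u x = (R (x 1)).mulVec x + ψ (x 1)

variable {A B C D : ℝ} {Ω : Set V2} {J : Set ℝ} {u : V2 → V2} {gu gs : V2 → Mat2}
  {σ : Measure V2} {R : ℝ → Mat2} {ψ : ℝ → V2} {γ : ℝ → ℝ}

namespace IsLayeredRigidMotion

lemma ae_antisymm (hu : IsLayeredRigidMotion Ω J u R ψ) (hJ : IsOpen J) :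
    ∀ᵐ t ∂volume.restrict J,
      ((R t).transpose * mDeriv R t).transpose = -((R t).transpose * mDeriv R t) := by
  filter_upwards [ae_all_iff.2 fun i => ae_all_iff.2 fun j =>
    ae_differentiableAt_of_boundedVariationOn hJ (hu.bvm.apply i j),
    ae_restrict_mem hJ.measurableSet] with t hd ht
  exact transpose_mul_mDeriv_antisymm (hJ.mem_nhds ht) hu.mem_SO2 hd

lemma ae_gradient_and_ae_singular
    (hu : IsLayeredRigidMotion (rectangle (Ioo A B) (Ioo C D)) (Ioo C D) u R ψ)
    (h : HasBVDerivOn (rectangle (Ioo A B) (Ioo C D)) u gu σ gs) :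
    (∀ᵐ x ∂volume.restrict (rectangle (Ioo A B) (Ioo C D)),
        gu x = R (x 1) + outer ((mDeriv R (x 1)).mulVec x + vecDeriv ψ (x 1)) e2) ∧
      ∀ᵐ x ∂σ, (gs x).mulVec e1 = 0 := by
  have haffine (i : Fin 2) := h.ae_deriv_of_affine_fst (i := i) (hu.bvm.apply i 0)
    (boundedVariationOn_add ((boundedVariationOn_id_Ioo C D).fun_mul (hu.bvm.apply i 1))
      (hu.bvv.apply i))
    (hu.ae_eq.mono fun x hx => by
      rw [hx, Pi.add_apply, mulVec_fin_two_apply]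
      ring)
  have hoffset (i : Fin 2) := ae_rectangle_of_ae (I := Ioo A B) <|
    (ae_differentiableAt_of_boundedVariationOn isOpen_Ioo (hu.bvm.apply i 1)).and
      (ae_differentiableAt_of_boundedVariationOn isOpen_Ioo (hu.bvv.apply i))
  constructor
  · filter_upwards [ae_all_iff.2 fun i => (haffine i).1, ae_all_iff.2 hoffset] with x hx hRψ
    ext i j
    obtain ⟨hR, hψ⟩ := hRψ i
    obtain ⟨hx₀, hx₁⟩ := hx i
    have hderiv := ((hasDerivAt_id' (x 1)).fun_mul hR.hasDerivAt).fun_add hψ.hasDerivAt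
    rw [hderiv.deriv] at hx₁
    simp only [Matrix.add_apply, outer, Matrix.of_apply, Pi.add_apply, mulVec_fin_two_apply]
    fin_cases j
    · simp [hx₀, e2]
    · simp only [Fin.mk_one, hx₁, one_mul, mDeriv, Matrix.of_apply, vecDeriv, e2,
        Matrix.cons_val_one, Matrix.cons_val_fin_one, mul_one]
      ring
  · filter_upwards [ae_all_iff.2 fun i => (haffine i).2] with x hx
    exact funext fun i => (mulVec_e1_apply _ i).trans (hx i)

lemma ae_det_gradient
    (hu : IsLayeredRigidMotion (rectangle (Ioo A B) (Ioo C D)) (Ioo C D) u R ψ)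
    (h : HasBVDerivOn (rectangle (Ioo A B) (Ioo C D)) u gu σ gs) :
    ∀ᵐ x ∂volume.restrict (rectangle (Ioo A B) (Ioo C D)),
      (gu x).det = 1 + (x 0 * dot ((mDeriv R (x 1)).mulVec e1) ((R (x 1)).mulVec e2)
        + dot (vecDeriv ψ (x 1)) ((R (x 1)).mulVec e2)) := by
  filter_upwards [(hu.ae_gradient_and_ae_singular h).1,
    ae_rectangle_of_ae (hu.ae_antisymm isOpen_Ioo),
    ae_restrict_mem (measurableSet_rectangle measurableSet_Ioo measurableSet_Ioo)] with x hx hR hxΩ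
  rw [hx, det_add_outer_e2 (hu.mem_SO2 _ hxΩ.2), dot_mulVec_add,
    dot_mulVec_e2_eq_zero_of_antisymm hR]
  ring

lemma ae_det_eq_one_iff (hAB : A < B)
    (hu : IsLayeredRigidMotion (rectangle (Ioo A B) (Ioo C D)) (Ioo C D) u R ψ)
    (h : HasBVDerivOn (rectangle (Ioo A B) (Ioo C D)) u gu σ gs) :
    (∀ᵐ x ∂volume.restrict (rectangle (Ioo A B) (Ioo C D)), (gu x).det = 1) ↔
      ∀ᵐ t ∂volume.restrict (Ioo C D),
        dot (vecDeriv ψ t) ((R t).mulVec e2) = 0 ∧ mDeriv R t = 0 := by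
  have hdet := hu.ae_det_gradient h
  constructor
  · intro hone
    obtain ⟨s₁, s₂, hs, hzero⟩ := exists_ne_ae_of_ae_rectangle hAB (hdet.and hone)
    filter_upwards [hzero, hu.ae_antisymm isOpen_Ioo, ae_restrict_mem measurableSet_Ioo]
      with t ⟨⟨h₁, h₁'⟩, h₂, h₂'⟩ hR ht
    simp only [Matrix.cons_val_zero, Matrix.cons_val_one] at h₁ h₂
    have hslope : dot ((mDeriv R t).mulVec e1) ((R t).mulVec e2) = 0 :=
      mul_left_cancel₀ (sub_ne_zero.2 hs) (by linear_combination h₁' - h₂' - h₁ + h₂)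
    rw [hslope] at h₁
    exact ⟨by linarith, eq_zero_of_antisymm_of_dot_eq_zero (hu.mem_SO2 t ht) hR hslope⟩
  · intro hzero
    filter_upwards [hdet, ae_rectangle_of_ae hzero] with x hx ⟨hψ, hR⟩
    rw [hx, hψ, hR, Matrix.zero_mulVec]
    simp [dot]

lemma integrableOn_dot_vecDeriv (hu : IsLayeredRigidMotion Ω (Ioo C D) u R ψ) :
    IntegrableOn (fun t => dot (vecDeriv ψ t) ((R t).mulVec e1)) (Ioo C D) := by
  refine integrable_finsetSum _ fun i _ => ?_
  obtain ⟨_, _, hψ⟩ := hasBVDerivDensityOn_of_boundedVariationOn (hu.bvv.apply i)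
  simp only [mulVec_e1_apply]
  exact hψ.integrable_density.mul_bdd (c := 1)
    (integrableOn_of_boundedVariationOn (hu.bvm.apply i 0)).aestronglyMeasurable
    ((ae_restrict_mem measurableSet_Ioo).mono fun t ht =>
      abs_apply_le_one_of_mem_SO2 (hu.mem_SO2 t ht) i 0)

lemma ae_gradient_eq_mul_shear
    (hu : IsLayeredRigidMotion (rectangle (Ioo A B) (Ioo C D)) (Ioo C D) u R ψ)
    (h : HasBVDerivOn (rectangle (Ioo A B) (Ioo C D)) u gu σ gs)
    (hzero : ∀ᵐ t ∂volume.restrict (Ioo C D),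
      dot (vecDeriv ψ t) ((R t).mulVec e2) = 0 ∧ mDeriv R t = 0) :
    ∀ᵐ x ∂volume.restrict (rectangle (Ioo A B) (Ioo C D)),
      gu x = R (x 1) * (1 + dot (vecDeriv ψ (x 1)) ((R (x 1)).mulVec e1) • outer e1 e2) := by
  filter_upwards [(hu.ae_gradient_and_ae_singular h).1, ae_rectangle_of_ae hzero,
    ae_restrict_mem (measurableSet_rectangle measurableSet_Ioo measurableSet_Ioo)]
    with x hx ⟨hψ, hR⟩ hxΩ
  rw [hx, hR, Matrix.zero_mulVec, zero_add, mul_one_add_smul_outer,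
    ← eq_smul_mulVec_e1 (hu.mem_SO2 _ hxΩ.2) hψ]

end IsLayeredRigidMotion

lemma HasBVDerivOn.exists_isLayeredRigidMotion (hAB : A < B)
    (h : HasBVDerivOn (rectangle (Ioo A B) (Ioo C D)) u gu σ gs) (hR : ∀ t ∈ Ioo C D, R t ∈ SO2)
    (hRbv : BVm R (Ioo C D))
    (hgu : ∀ᵐ x ∂volume.restrict (rectangle (Ioo A B) (Ioo C D)),
      gu x = R (x 1) * (1 + γ (x 1) • outer e1 e2))
    (hgs : ∀ᵐ x ∂σ, (gs x).mulVec e1 = 0) :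
    ∃ ψ, IsLayeredRigidMotion (rectangle (Ioo A B) (Ioo C D)) (Ioo C D) u R ψ := by
  have hcol (i : Fin 2) := h.exists_ae_eq_affine_fst (i := i) hAB (hRbv.apply i 0)
    (hgu.mono fun x hx => by
      rw [hx, mul_one_add_smul_outer]
      simp [outer, e2])
    (hgs.mono fun x hx => (mulVec_e1_apply _ i).symm.trans (congrFun hx i))
  choose b hb hub using hcol
  refine ⟨fun t i => b i t - t * R t i 1, hR, hRbv, BVv.of_apply fun i =>
    boundedVariationOn_sub (hb i) ((boundedVariationOn_id_Ioo C D).fun_mul (hRbv.apply i 1)), ?_⟩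
  filter_upwards [ae_all_iff.2 hub] with x hx
  ext i
  rw [hx, Pi.add_apply, mulVec_fin_two_apply]
  ring

lemma ae_det_eq_one_of_ae_eq_mul_shear (hΩ : MeasurableSet Ω) (hΩJ : ∀ x ∈ Ω, x 1 ∈ J)
    (hR : ∀ t ∈ J, R t ∈ SO2)
    (hgu : ∀ᵐ x ∂volume.restrict Ω, gu x = R (x 1) * (1 + γ (x 1) • outer e1 e2)) :
    ∀ᵐ x ∂volume.restrict Ω, (gu x).det = 1 := by
  filter_upwards [hgu, ae_restrict_mem hΩ] with x hx hxΩ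
  have hRx := hR _ (hΩJ x hxΩ)
  rw [hx, mul_one_add_smul_outer, det_add_outer_e2 hRx, dot_smul_mulVec_e1_mulVec_e2 hRx, add_zero]

end LayeredRigidMotions

theorem charA_Rect_general {A B C D : ℝ} (hAB : A < B) :
    ∀ u : V2 → V2,
      (memAOn (rectangle (Ioo A B) (Ioo C D)) C D u ↔
        (∃ gu σ gs, HasBVDerivOn (rectangle (Ioo A B) (Ioo C D)) u gu σ gs ∧
          ∃ R : ℝ → Mat2, ∃ γ : ℝ → ℝ,
            (∀ t ∈ Ioo C D, R t ∈ SO2) ∧ BVm R (Ioo C D) ∧ IntegrableOn γ (Ioo C D) volume ∧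
            (∀ᵐ x ∂(volume.restrict (rectangle (Ioo A B) (Ioo C D))),
              gu x = R (x 1) * (1 + γ (x 1) • outer e1 e2)) ∧
            (∀ᵐ x ∂σ, (gs x).mulVec e1 = 0))) ∧
      (memAOn (rectangle (Ioo A B) (Ioo C D)) C D u ↔
        (∃ gu σ gs, HasBVDerivOn (rectangle (Ioo A B) (Ioo C D)) u gu σ gs ∧
          ∃ R : ℝ → Mat2, ∃ ψ : ℝ → V2,
            (∀ t ∈ Ioo C D, R t ∈ SO2) ∧ BVm R (Ioo C D) ∧ BVv ψ (Ioo C D) ∧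
            (∀ᵐ x ∂(volume.restrict (rectangle (Ioo A B) (Ioo C D))),
              u x = (R (x 1)).mulVec x + ψ (x 1)) ∧
            (∀ᵐ t ∂(volume.restrict (Ioo C D)),
              dot (vecDeriv ψ t) ((R t).mulVec e2) = 0 ∧ mDeriv R t = 0))) := by
  intro u
  refine ⟨⟨?_, ?_⟩, ⟨?_, ?_⟩⟩
  · rintro ⟨gu, σ, gs, h, ⟨R, ψ, hR, hRbv, hψ, hu⟩, hdet⟩
    have hu : IsLayeredRigidMotion _ _ u R ψ := ⟨hR, hRbv, hψ, hu⟩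
    exact ⟨gu, σ, gs, h, R, _, hR, hRbv, hu.integrableOn_dot_vecDeriv,
      hu.ae_gradient_eq_mul_shear h ((hu.ae_det_eq_one_iff hAB h).1 hdet),
      (hu.ae_gradient_and_ae_singular h).2⟩
  · rintro ⟨gu, σ, gs, h, R, γ, hR, hRbv, -, hgu, hgs⟩
    obtain ⟨ψ, hu⟩ := h.exists_isLayeredRigidMotion hAB hR hRbv hgu hgs
    exact ⟨gu, σ, gs, h, ⟨R, ψ, hR, hRbv, hu.bvv, hu.ae_eq⟩, ae_det_eq_one_of_ae_eq_mul_shear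
      (measurableSet_rectangle measurableSet_Ioo measurableSet_Ioo) (fun x hx => hx.2) hR hgu⟩
  · rintro ⟨gu, σ, gs, h, ⟨R, ψ, hR, hRbv, hψ, hu⟩, hdet⟩
    have hu' : IsLayeredRigidMotion _ _ u R ψ := ⟨hR, hRbv, hψ, hu⟩
    exact ⟨gu, σ, gs, h, R, ψ, hR, hRbv, hψ, hu, (hu'.ae_det_eq_one_iff hAB h).1 hdet⟩
  · rintro ⟨gu, σ, gs, h, R, ψ, hR, hRbv, hψ, hu, hzero⟩
    have hu' : IsLayeredRigidMotion _ _ u R ψ := ⟨hR, hRbv, hψ, hu⟩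
    exact ⟨gu, σ, gs, h, ⟨R, ψ, hR, hRbv, hψ, hu⟩, (hu'.ae_det_eq_one_iff hAB h).2 hzero⟩

/-- Proposition 4.1: two alternative representations of `A` on
`Ω = (0,1) × (−1,1)`: (1) `A` consists of the `BV` maps with
`∇u(x) = R(x₂)(I + γ(x₂) e₁⊗e₂)` a.e., `R ∈ BV(−1,1;SO(2))`, `γ ∈ L¹(−1,1)` and
`(D^s u) e₁ = 0`; (2) `A` consists of the maps `u(x) = R(x₂)x + ψ(x₂)` with
`R ∈ BV(−1,1;SO(2))`, `ψ ∈ BV(−1,1;ℝ²)`, `ψ'·Re₂ = 0` and `R' = 0` a.e. in `(−1,1)`. -/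
theorem charA_Rect :
    ∀ u : V2 → V2,
      (memAOn Rect (-1) 1 u ↔
        (∃ gu σ gs, HasBVDerivOn Rect u gu σ gs ∧
          ∃ R : ℝ → Mat2, ∃ γ : ℝ → ℝ,
            (∀ t ∈ Ioo (-1:ℝ) 1, R t ∈ SO2) ∧ BVm R (Ioo (-1) 1) ∧
            IntegrableOn γ (Ioo (-1:ℝ) 1) volume ∧
            (∀ᵐ x ∂(volume.restrict Rect),
              gu x = R (x 1) * (1 + γ (x 1) • outer e1 e2)) ∧
            (∀ᵐ x ∂σ, (gs x).mulVec e1 = 0))) ∧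
      (memAOn Rect (-1) 1 u ↔
        (∃ gu σ gs, HasBVDerivOn Rect u gu σ gs ∧
          ∃ R : ℝ → Mat2, ∃ ψ : ℝ → V2,
            (∀ t ∈ Ioo (-1:ℝ) 1, R t ∈ SO2) ∧ BVm R (Ioo (-1) 1) ∧ BVv ψ (Ioo (-1) 1) ∧
            (∀ᵐ x ∂(volume.restrict Rect), u x = (R (x 1)).mulVec x + ψ (x 1)) ∧
            (∀ᵐ t ∂(volume.restrict (Ioo (-1:ℝ) 1)),
              dot (vecDeriv ψ t) ((R t).mulVec e2) = 0 ∧ mDeriv R t = 0))) := by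
  exact charA_Rect_general zero_lt_one

end
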